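/- Let A be a commutative noetherian ring and let B be a nonzero, flat, formally smooth A-algebra which is essentially of finite type over A, and assume Spec(B) is connected. Then there exist an invertible B-module N̄ and an integer n ≥ 0 such that Ext^i_{B ⊗_A B}(B, N̄ ⊗_A N̄) = 0 for all i ≠ n and Ext^n_{B ⊗_A B}(B, N̄ ⊗_A N̄) ≅ N̄ as B-modules; that is, N̄ is (up to shift) a rigid module over B relative to A. -/

import Mathlib

universe u

open CategoryTheory TensorProduct

/-- An `R`-module `L` is *invertible* if there is an `R`-module `L'` with `L ⊗[R] L' ≅ R`. -/
def Module.IsInvertible (R : Type u) [CommRing R] (L : Type u) [AddCommGroup L] [Module R L] :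
    Prop :=
  ∃ (L' : Type u) (_ : AddCommGroup L') (_ : Module R L'),
    Nonempty ((TensorProduct R L L') ≃ₗ[R] R)

/-- For `B`-modules `M` and `N` (over an `A`-algebra `B`), the module structure on
`M ⊗[A] N` over the enveloping ring `B ⊗[A] B`, where
`(b ⊗ b') • (m ⊗ n) = (b • m) ⊗ (b' • n)`. -/
noncomputable def TensorProduct.envModule (A B : Type u) [CommRing A] [CommRing B] [Algebra A B]
    (N : Type u) [AddCommGroup N] [Module A N] [Module B N] [IsScalarTower A B N] :
    Module (B ⊗[A] B) (N ⊗[A] N) :=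
  Module.compHom _
    ((Module.endTensorEndAlgHom (R := A) (S := A) (A := A) (M := N) (N := N)).comp
      (Algebra.TensorProduct.map
        (Algebra.lsmul A A N : B →ₐ[A] Module.End A N)
        (Algebra.lsmul A A N : B →ₐ[A] Module.End A N))).toRingHom

/-!
The kernel of the multiplication `B ⊗[A] B → B` is locally generated by `n` elements lifting a basis
of `Ω[B⁄A]`, where `n` is the constant rank of `Ω[B⁄A]`.  Formal smoothness makes them formal
coordinates: modulo powers of the kernel, `B ⊗[A] B` looks like a polynomial ring over `B` in these
elements, so they form a regular sequence.  By Rees' theorem `Ext^i(B, B ⊗[A] B)` then vanishes for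
`i ≠ n`, and `D := Ext^n(B, B ⊗[A] B)` is locally isomorphic to `B`, hence invertible.  For a finite
projective `B`-module `N` one has `Ext^i(B, N ⊗[A] N) ≃ Ext^i(B, B ⊗[A] B) ⊗[B] (N ⊗[B] N)`, so the
dual of `D` is rigid.
-/

section FormalCoordinates

open MvPolynomial

variable {ι B S : Type*} [CommRing B] [CommRing S] [Algebra B S]

theorem mem_idealOfVars_pow_of_X_mul_mem {i : ι} {f : MvPolynomial ι B} {k : ℕ}
    (h : X i * f ∈ idealOfVars ι B ^ (k + 1)) : f ∈ idealOfVars ι B ^ k := by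
  rw [mem_pow_idealOfVars_iff] at h ⊢
  intro m hm
  have hdeg := h (m + Finsupp.single i 1) (by
    rw [mem_support_iff, mul_comm, coeff_mul_X]
    exact mem_support_iff.mp hm)
  simpa using hdeg

theorem map_aeval_idealOfVars (x : ι → S) :
    (idealOfVars ι B).map (aeval (R := B) x) = Ideal.span (Set.range x) := by
  rw [idealOfVars, Ideal.map_span, ← Set.range_comp]
  simp only [Function.comp_def, aeval_X]

theorem aeval_mem_pow {x : ι → S} {I : Ideal S} (hx : ∀ i, x i ∈ I) {k : ℕ}
    {f : MvPolynomial ι B} (hf : f ∈ idealOfVars ι B ^ k) : aeval x f ∈ I ^ k := by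
  have h := Ideal.mem_map_of_mem (aeval (R := B) x) hf
  rw [Ideal.map_pow, map_aeval_idealOfVars] at h
  exact Ideal.pow_right_mono (Ideal.span_le.mpr (Set.range_subset_iff.mpr hx)) k h

theorem sub_C_constantCoeff_mem_idealOfVars (f : MvPolynomial ι B) :
    f - C (constantCoeff f) ∈ idealOfVars ι B := by
  rw [← pow_one (idealOfVars ι B), mem_pow_idealOfVars_iff']
  intro m hm
  obtain rfl : m = 0 := by rw [← Finsupp.degree_eq_zero_iff]; omega
  simp [constantCoeff_eq]

theorem aeval_sub_aeval_mem_pow_succ {u v : ι → S} {I : Ideal S} (hu : ∀ i, u i ∈ I)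
    (hv : ∀ i, v i ∈ I) (huv : ∀ i, u i - v i ∈ I ^ 2) {k : ℕ} {f : MvPolynomial ι B}
    (hf : f ∈ idealOfVars ι B ^ k) : aeval u f - aeval v f ∈ I ^ (k + 1) := by
  have on_monomial (m : ι →₀ ℕ) (b : B) : ∀ k, monomial m b ∈ idealOfVars ι B ^ k →
      aeval u (monomial m b) - aeval v (monomial m b) ∈ I ^ (k + 1) := by
    refine induction_on_monomial (motive := fun p => ∀ k, p ∈ idealOfVars ι B ^ k →
      aeval u p - aeval v p ∈ I ^ (k + 1)) (fun b => by simp) (fun p i ih k hk => ?_) m b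
    have hp : p ∈ idealOfVars ι B ^ (k - 1) := by
      cases k with
      | zero => simp
      | succ k => exact mem_idealOfVars_pow_of_X_mul_mem (mul_comm p (X i) ▸ hk)
    have h₁ := Ideal.mul_mem_mul (ih _ hp) (hu i)
    have h₂ := Ideal.mul_mem_mul (aeval_mem_pow hv hp) (huv i)
    rw [← pow_succ] at h₁
    rw [← pow_add] at h₂
    have hsplit : aeval u (p * X i) - aeval v (p * X i) =
        (aeval u p - aeval v p) * u i + aeval v p * (u i - v i) := by
      simp only [map_mul, aeval_X]; ring
    rw [hsplit]
    exact Ideal.pow_le_pow_right (by omega) (add_mem h₁ h₂)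
  rw [mem_pow_idealOfVars_iff] at hf
  rw [f.as_sum, map_sum, map_sum, ← Finset.sum_sub_distrib]
  refine sum_mem fun m hm => on_monomial m _ k ?_
  rw [monomial_mem_pow_idealOfVars_iff _ _ (mem_support_iff.mp hm)]
  exact hf m hm

/-- A family `x` in a `B`-algebra `S` is a system of *formal coordinates* along the ideal `(x)` if
`X i ↦ x i` induces isomorphisms `B[X] / (X) ^ k ≃ S / (x) ^ k` for all `k`. -/
structure IsFormalCoordinates (B : Type*) {ι S : Type*} [CommRing B] [CommRing S] [Algebra B S]
    (x : ι → S) : Prop where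
  exists_sub_aeval_mem (k : ℕ) (s : S) :
    ∃ f : MvPolynomial ι B, s - aeval x f ∈ Ideal.span (Set.range x) ^ k
  mem_of_aeval_mem {k : ℕ} {f : MvPolynomial ι B} :
    aeval x f ∈ Ideal.span (Set.range x) ^ k → f ∈ idealOfVars ι B ^ k

namespace IsFormalCoordinates

variable {x : ι → S}

theorem exists_mem_span_sub_aeval_mem (hx : IsFormalCoordinates B x) (T : Set ι) (k : ℕ) {s : S}
    (hs : s ∈ Ideal.span (x '' T)) :
    ∃ h ∈ Ideal.span ((X : ι → MvPolynomial ι B) '' T),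
      s - aeval x h ∈ Ideal.span (Set.range x) ^ k := by
  induction hs using Submodule.span_induction with
  | mem s hs =>
    obtain ⟨i, hi, rfl⟩ := hs
    exact ⟨X i, Ideal.subset_span ⟨i, hi, rfl⟩, by simp⟩
  | zero => exact ⟨0, zero_mem _, by simp⟩
  | add s t _ _ hs ht =>
    obtain ⟨g, hg, hsg⟩ := hs
    obtain ⟨h, hh, hth⟩ := ht
    exact ⟨g + h, add_mem hg hh, by simpa [add_sub_add_comm] using add_mem hsg hth⟩
  | smul a s _ hs =>
    obtain ⟨h, hh, hsh⟩ := hs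
    obtain ⟨g, hg⟩ := hx.exists_sub_aeval_mem k a
    refine ⟨g * h, Ideal.mul_mem_left _ g hh, ?_⟩
    have hsplit : a • s - aeval x (g * h) =
        (a - aeval x g) * s + aeval x g * (s - aeval x h) := by
      simp only [smul_eq_mul, map_mul]; ring
    rw [hsplit]
    exact add_mem (Ideal.mul_mem_right _ _ hg) (Ideal.mul_mem_left _ _ hsh)

/-- The variables outside `T` remain a nonzerodivisor after killing those in `T`; transporting
this along `B[X] / (X) ^ (k + 1) ≃ S / (x) ^ (k + 1)` proves the claim up to `(x) ^ k`. -/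
theorem mem_sup_pow_of_mul_mem (hx : IsFormalCoordinates B x) {T : Set ι} {i : ι} (hi : i ∉ T)
    {s : S} (hs : x i * s ∈ Ideal.span (x '' T)) (k : ℕ) :
    s ∈ Ideal.span (x '' T) ⊔ Ideal.span (Set.range x) ^ k := by
  classical
  have hxK (j : ι) : x j ∈ Ideal.span (Set.range x) := Ideal.subset_span ⟨j, rfl⟩
  let killT : MvPolynomial ι B →ₐ[B] MvPolynomial ι B := aeval fun j => if j ∈ T then 0 else X j
  obtain ⟨f, hf⟩ := hx.exists_sub_aeval_mem k s
  obtain ⟨h, hhT, hh⟩ := hx.exists_mem_span_sub_aeval_mem T (k + 1) hs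
  have hXf : X i * f - h ∈ idealOfVars ι B ^ (k + 1) := by
    refine hx.mem_of_aeval_mem ?_
    have hsplit : aeval x (X i * f - h) = (x i * s - aeval x h) - x i * (s - aeval x f) := by
      simp only [map_sub, map_mul, aeval_X]; ring
    rw [hsplit]
    exact sub_mem hh (pow_succ' (Ideal.span (Set.range x)) k ▸ Ideal.mul_mem_mul (hxK i) hf)
  have hkill_h : killT h = 0 := by
    have hle : Ideal.span (X '' T) ≤ RingHom.ker killT := by
      rw [Ideal.span_le]
      rintro _ ⟨j, hj, rfl⟩
      simp [killT, RingHom.mem_ker, hj]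
    exact hle hhT
  have hkill_f : killT f ∈ idealOfVars ι B ^ k := by
    refine mem_idealOfVars_pow_of_X_mul_mem (i := i) ?_
    have hmem : killT (X i * f - h) ∈ idealOfVars ι B ^ (k + 1) := by
      refine aeval_mem_pow (fun j => ?_) hXf
      split_ifs
      · exact zero_mem _
      · exact Ideal.subset_span ⟨j, rfl⟩
    rwa [map_sub, hkill_h, sub_zero, map_mul,
      show killT (X i) = X i by simp only [killT, aeval_X, if_neg hi]] at hmem
  have hdiff : aeval x f - aeval x (killT f) ∈ Ideal.span (x '' T) := by
    rw [← Ideal.Quotient.mk_eq_mk_iff_sub_mem]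
    have hcomp : (Ideal.Quotient.mkₐ B (Ideal.span (x '' T))).comp (aeval x) =
        ((Ideal.Quotient.mkₐ B (Ideal.span (x '' T))).comp (aeval x)).comp killT := by
      ext j
      by_cases hj : j ∈ T
      · simpa [killT, hj, Ideal.Quotient.eq_zero_iff_mem] using
          Ideal.subset_span (Set.mem_image_of_mem x hj)
      · simp [killT, hj]
    exact DFunLike.congr_fun hcomp f
  have hsplit : s = (aeval x f - aeval x (killT f)) + ((s - aeval x f) + aeval x (killT f)) := by
    ring
  rw [hsplit]
  exact Submodule.add_mem_sup hdiff (add_mem hf (aeval_mem_pow hxK hkill_f))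

end IsFormalCoordinates

theorem mem_of_forall_mem_sup_pow [IsNoetherianRing S] [IsLocalRing S] {K L : Ideal S}
    (hK : K ≠ ⊤) {s : S} (hs : ∀ k, s ∈ L ⊔ K ^ k) : s ∈ L := by
  rw [← Ideal.Quotient.eq_zero_iff_mem, ← Submodule.mem_bot (M := S ⧸ L) S,
    ← Ideal.iInf_pow_smul_eq_bot_of_isLocalRing K hK, Submodule.mem_iInf]
  intro k
  obtain ⟨a, ha, b, hb, rfl⟩ := Submodule.mem_sup.mp (hs k)
  have hab : Ideal.Quotient.mk L (a + b) = b • (1 : S ⧸ L) := by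
    rw [map_add, Ideal.Quotient.eq_zero_iff_mem.mpr ha, zero_add, Algebra.smul_def, mul_one]
    rfl
  rw [hab]
  exact Submodule.smul_mem_smul hb Submodule.mem_top

theorem ofList_take_ofFn {n : ℕ} (x : Fin n → S) (i : Fin n) :
    Ideal.ofList ((List.ofFn x).take i) = Ideal.span (x '' Set.Iio i) := by
  rw [Ideal.ofList]
  congr 1
  ext s
  simp only [Set.mem_ofPred_eq, Set.mem_image, Set.mem_Iio, List.mem_take_iff_getElem]
  constructor
  · rintro ⟨j, hj, rfl⟩
    exact ⟨⟨j, by simpa using (lt_min_iff.mp hj).2⟩, (lt_min_iff.mp hj).1, by simp⟩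
  · rintro ⟨j, hj, rfl⟩
    exact ⟨j, lt_min hj (by simp), by simp⟩

theorem IsFormalCoordinates.isWeaklyRegular [IsNoetherianRing S] [IsLocalRing S] {n : ℕ}
    {x : Fin n → S} (hx : IsFormalCoordinates B x) (hne : Ideal.span (Set.range x) ≠ ⊤) :
    RingTheory.Sequence.IsWeaklyRegular S (List.ofFn x) := by
  rw [RingTheory.Sequence.isWeaklyRegular_iff_Fin]
  intro i
  obtain ⟨j, rfl⟩ := (finCongr (List.length_ofFn (f := x)).symm).surjective i
  rw [isSMulRegular_iff_right_eq_zero_of_smul]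
  intro m hm
  obtain ⟨s, rfl⟩ := Submodule.Quotient.mk_surjective _ m
  rw [← Submodule.Quotient.mk_smul, Submodule.Quotient.mk_eq_zero] at hm
  rw [Submodule.Quotient.mk_eq_zero]
  simp only [smul_eq_mul, Ideal.mul_top, finCongr_apply, Fin.val_cast, ofList_take_ofFn,
    Fin.getElem_fin, List.getElem_ofFn, Fin.eta] at hm ⊢
  exact mem_of_forall_mem_sup_pow hne (hx.mem_sup_pow_of_mul_mem (lt_irrefl j) hm)

end FormalCoordinates

section FormallySmoothRetraction

open MvPolynomial

variable {ι B S : Type*} [CommRing B] [CommRing S] [Algebra B S] {σ : S →ₐ[B] B} {x : ι → S}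

theorem exists_sub_aeval_mem_pow_succ (hker : RingHom.ker σ = Ideal.span (Set.range x))
    {k : ℕ} {s : S} (hs : s ∈ Ideal.span (Set.range x) ^ k) :
    ∃ f : MvPolynomial ι B, s - aeval x f ∈ Ideal.span (Set.range x) ^ (k + 1) := by
  have hx (i : ι) : x i ∈ Ideal.span (Set.range x) := Ideal.subset_span ⟨i, rfl⟩
  rw [← map_aeval_idealOfVars (B := B), ← Ideal.map_pow] at hs
  suffices ∃ f ∈ idealOfVars ι B ^ k, s - aeval x f ∈ Ideal.span (Set.range x) ^ (k + 1) from
    let ⟨f, _, hf⟩ := this; ⟨f, hf⟩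
  induction hs using Submodule.span_induction with
  | mem s hs =>
    obtain ⟨f, hf, rfl⟩ := hs
    exact ⟨f, hf, by simp⟩
  | zero => exact ⟨0, zero_mem _, by simp⟩
  | add s t _ _ hs ht =>
    obtain ⟨f, hf, hsf⟩ := hs
    obtain ⟨g, hg, htg⟩ := ht
    exact ⟨f + g, add_mem hf hg, by simpa [add_sub_add_comm] using add_mem hsf htg⟩
  | smul a s _ hs =>
    obtain ⟨f, hf, hsf⟩ := hs
    refine ⟨C (σ a) * f, Ideal.mul_mem_left _ _ hf, ?_⟩
    have ha : a - algebraMap B S (σ a) ∈ Ideal.span (Set.range x) := by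
      rw [← hker, RingHom.mem_ker]; simp
    have hsplit : a • s - aeval x (C (σ a) * f) =
        a * (s - aeval x f) + (a - algebraMap B S (σ a)) * aeval x f := by
      simp only [smul_eq_mul, map_mul, ← algebraMap_eq, AlgHom.commutes]; ring
    rw [hsplit, pow_succ']
    exact add_mem (Ideal.mul_mem_left _ _ (pow_succ' (Ideal.span (Set.range x)) k ▸ hsf))
      (Ideal.mul_mem_mul ha (aeval_mem_pow hx hf))

theorem exists_sub_aeval_mem_pow (hker : RingHom.ker σ = Ideal.span (Set.range x)) (k : ℕ)
    (s : S) : ∃ f : MvPolynomial ι B, s - aeval x f ∈ Ideal.span (Set.range x) ^ k := by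
  induction k with
  | zero => exact ⟨0, by simp⟩
  | succ k ih =>
    obtain ⟨f, hf⟩ := ih
    obtain ⟨g, hg⟩ := exists_sub_aeval_mem_pow_succ hker hf
    exact ⟨f + g, by rwa [map_add, ← sub_sub]⟩

theorem mem_idealOfVars_of_aeval_mem_ker (hx : ∀ i, σ (x i) = 0) {f : MvPolynomial ι B}
    (hf : σ (aeval x f) = 0) : f ∈ idealOfVars ι B := by
  have hσ : σ.comp (aeval x) = aeval 0 := by ext i; simp [hx]
  have hf₀ : constantCoeff f = 0 := by
    rw [← hf, ← AlgHom.comp_apply, hσ]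
    simp [constantCoeff_eq]
  simpa [hf₀] using sub_C_constantCoeff_mem_idealOfVars f

theorem mem_idealOfVars_sq_of_aeval_mem_sq [Finite ι]
    (hker : RingHom.ker σ = Ideal.span (Set.range x))
    (hind : LinearIndependent B fun i => Ideal.Quotient.mk (Ideal.span (Set.range x) ^ 2) (x i))
    {f : MvPolynomial ι B} (hf : aeval x f ∈ Ideal.span (Set.range x) ^ 2) :
    f ∈ idealOfVars ι B ^ 2 := by
  cases nonempty_fintype ι
  have hx (i : ι) : x i ∈ Ideal.span (Set.range x) := Ideal.subset_span ⟨i, rfl⟩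
  have hfJ : f ∈ idealOfVars ι B :=
    mem_idealOfVars_of_aeval_mem_ker (fun i => RingHom.mem_ker.mp (hker ▸ hx i))
      (RingHom.mem_ker.mp (hker ▸ Ideal.pow_le_self two_ne_zero hf))
  obtain ⟨g, rfl⟩ := (Submodule.mem_span_range_iff_exists_fun _).mp hfJ
  have hlin : ∑ i, g i • X i - ∑ i, constantCoeff (g i) • X i ∈ idealOfVars ι B ^ 2 := by
    rw [← Finset.sum_sub_distrib]
    refine sum_mem fun i _ => ?_
    rw [smul_eq_mul, smul_eq_C_mul, ← sub_mul, pow_two]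
    exact Ideal.mul_mem_mul (sub_C_constantCoeff_mem_idealOfVars _) (Ideal.subset_span ⟨i, rfl⟩)
  have hzero : ∑ i, constantCoeff (g i) • Ideal.Quotient.mk (Ideal.span (Set.range x) ^ 2) (x i)
      = 0 := by
    have hmem := sub_mem hf (aeval_mem_pow hx hlin)
    rw [← map_sub, sub_sub_cancel] at hmem
    simpa [Algebra.smul_def, ← Ideal.Quotient.eq_zero_iff_mem, map_sum] using hmem
  simpa [Fintype.linearIndependent_iff.mp hind _ hzero] using hlin

theorem mem_pow_of_mk_mem_pow {J : Ideal B} {k N : ℕ} (hkN : k ≤ N) {b : B}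
    (hb : Ideal.Quotient.mk (J ^ N) b ∈ J.map (Ideal.Quotient.mk (J ^ N)) ^ k) : b ∈ J ^ k := by
  rw [← Ideal.map_pow, ← Ideal.mem_comap, Ideal.comap_map_mk (Ideal.pow_le_pow_right hkN)] at hb
  exact hb

/-- Formal smoothness lifts `S → S / (x) ^ 2 ≃ B[X] / (X) ^ 2` to an approximate inverse of
`X i ↦ x i` modulo `(X) ^ N`. -/
theorem exists_algHom_sub_mem_sq [Finite ι] [Algebra.FormallySmooth B S]
    (hker : RingHom.ker σ = Ideal.span (Set.range x))
    (hind : LinearIndependent B fun i => Ideal.Quotient.mk (Ideal.span (Set.range x) ^ 2) (x i))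
    {N : ℕ} (hN : 2 ≤ N) :
    ∃ φ : S →ₐ[B] MvPolynomial ι B ⧸ idealOfVars ι B ^ N, ∀ i,
      φ (x i) - Ideal.Quotient.mk _ (X i) ∈
        (idealOfVars ι B).map (Ideal.Quotient.mk (idealOfVars ι B ^ N)) ^ 2 := by
  have hx (i : ι) : x i ∈ Ideal.span (Set.range x) := Ideal.subset_span ⟨i, rfl⟩
  let g : (MvPolynomial ι B ⧸ idealOfVars ι B ^ N) →ₐ[B] S ⧸ Ideal.span (Set.range x) ^ 2 :=
    Ideal.Quotient.liftₐ _ ((Ideal.Quotient.mkₐ B _).comp (aeval x)) fun f hf =>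
      Ideal.Quotient.eq_zero_iff_mem.mpr (aeval_mem_pow hx (Ideal.pow_le_pow_right hN hf))
  have hg (f : MvPolynomial ι B) : g (Ideal.Quotient.mk _ f) = Ideal.Quotient.mk _ (aeval x f) :=
    rfl
  have hg_ker : RingHom.ker g ≤
      (idealOfVars ι B).map (Ideal.Quotient.mk (idealOfVars ι B ^ N)) ^ 2 := by
    intro y hy
    obtain ⟨f, rfl⟩ := Ideal.Quotient.mk_surjective y
    rw [RingHom.mem_ker, hg, Ideal.Quotient.eq_zero_iff_mem] at hy
    rw [← Ideal.map_pow]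
    exact Ideal.mem_map_of_mem _ (mem_idealOfVars_sq_of_aeval_mem_sq hker hind hy)
  have hg_surj : Function.Surjective g := by
    intro y
    obtain ⟨s, rfl⟩ := Ideal.Quotient.mk_surjective y
    obtain ⟨f, hf⟩ := exists_sub_aeval_mem_pow hker 2 s
    exact ⟨Ideal.Quotient.mk _ f, (Ideal.Quotient.eq.mpr hf).symm⟩
  have hg_nil : IsNilpotent (RingHom.ker g) := by
    refine ⟨N, eq_bot_iff.mpr (le_trans (Ideal.pow_right_mono
      (hg_ker.trans (Ideal.pow_le_self two_ne_zero)) N) ?_)⟩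
    rw [← Ideal.map_pow, Ideal.map_quotient_self]
  refine ⟨Algebra.FormallySmooth.liftOfSurjective (Ideal.Quotient.mkₐ B _) g hg_surj hg_nil,
    fun i => hg_ker ?_⟩
  rw [RingHom.mem_ker, map_sub, Algebra.FormallySmooth.liftOfSurjective_apply, hg, aeval_X]
  exact sub_self _

theorem mem_idealOfVars_pow_of_aeval_mem_pow [Finite ι] [Algebra.FormallySmooth B S]
    (hker : RingHom.ker σ = Ideal.span (Set.range x))
    (hind : LinearIndependent B fun i => Ideal.Quotient.mk (Ideal.span (Set.range x) ^ 2) (x i))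
    {k : ℕ} {f : MvPolynomial ι B} (hf : aeval x f ∈ Ideal.span (Set.range x) ^ k) :
    f ∈ idealOfVars ι B ^ k := by
  obtain ⟨φ, hφ⟩ := exists_algHom_sub_mem_sq hker hind (Nat.le_add_left 2 k)
  set I := (idealOfVars ι B).map (Ideal.Quotient.mk (idealOfVars ι B ^ (k + 2)))
  have hX (i : ι) : Ideal.Quotient.mk (idealOfVars ι B ^ (k + 2)) (X i) ∈ I :=
    Ideal.mem_map_of_mem _ (Ideal.subset_span ⟨i, rfl⟩)
  have hφx (i : ι) : φ (x i) ∈ I := by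
    simpa using add_mem (Ideal.pow_le_self two_ne_zero (hφ i)) (hX i)
  have hφf : aeval (fun i => φ (x i)) f ∈ I ^ k := by
    have hmap := Ideal.mem_map_of_mem φ hf
    rw [Ideal.map_pow, comp_aeval_apply] at hmap
    refine Ideal.pow_right_mono ?_ k hmap
    rw [Ideal.map_span, Ideal.span_le]
    rintro _ ⟨_, ⟨i, rfl⟩, rfl⟩
    exact hφx i
  have hmk : aeval (fun i => Ideal.Quotient.mk (idealOfVars ι B ^ (k + 2)) (X i)) f =
      Ideal.Quotient.mk _ f := by
    rw [← Ideal.Quotient.mkₐ_eq_mk B, ← comp_aeval_apply, aeval_X_left_apply]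
  suffices ∀ m ≤ k, f ∈ idealOfVars ι B ^ m from this k le_rfl
  intro m
  induction m with
  | zero => simp
  | succ m ih =>
    intro hm
    refine mem_pow_of_mk_mem_pow (N := k + 2) (by omega) ?_
    have hdiff := aeval_sub_aeval_mem_pow_succ hφx hX hφ (ih (by omega))
    rw [hmk] at hdiff
    simpa using sub_mem (Ideal.pow_le_pow_right hm hφf) hdiff

theorem isFormalCoordinates_of_formallySmooth [Finite ι] [Algebra.FormallySmooth B S]
    (hker : RingHom.ker σ = Ideal.span (Set.range x))
    (hind : LinearIndependent B fun i => Ideal.Quotient.mk (Ideal.span (Set.range x) ^ 2) (x i)) :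
    IsFormalCoordinates B x where
  exists_sub_aeval_mem := exists_sub_aeval_mem_pow hker
  mem_of_aeval_mem := mem_idealOfVars_pow_of_aeval_mem_pow hker hind

end FormallySmoothRetraction

section LocalRetraction

variable {B S : Type*} [CommRing B] [CommRing S] [Algebra B S] [Algebra.FormallySmooth B S]

-- The conormal sequence `K / K ^ 2 → B ⊗[S] Ω[S⁄B] → Ω[B⁄B] = 0` is left exact by smoothness.
theorem exists_linearIndependent_mk_ker_sq [IsLocalRing S] [Nontrivial B] [Algebra S B]
    [IsScalarTower B S B] [Module.Finite S Ω[S⁄B]] :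
    ∃ x : Fin (Module.finrank S Ω[S⁄B]) → S, (∀ i, x i ∈ RingHom.ker (algebraMap S B)) ∧
      LinearIndependent B
        (fun i => Ideal.Quotient.mk (RingHom.ker (algebraMap S B) ^ 2) (x i)) ∧
      RingHom.ker (algebraMap S B) ≤
        Ideal.span (Set.range x) ⊔ RingHom.ker (algebraMap S B) ^ 2 := by
  have hB (b : B) : algebraMap S B (algebraMap B S b) = b :=
    (IsScalarTower.algebraMap_apply B S B b).symm
  have hsurj : Function.Surjective (algebraMap S B) := fun b => ⟨algebraMap B S b, hB b⟩
  have : Module.Free S Ω[S⁄B] := Module.free_of_flat_of_isLocalRing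
  let b : Module.Basis (Fin (Module.finrank S Ω[S⁄B])) B (B ⊗[S] Ω[S⁄B]) :=
    Algebra.TensorProduct.basis B (Module.finBasis S Ω[S⁄B])
  let δ := KaehlerDifferential.kerCotangentToTensor B S B
  have hδ_inj : Function.Injective δ :=
    (Algebra.FormallySmooth.kerCotangentToTensor_injective_iff hsurj).mpr inferInstance
  have hδ_surj : Function.Surjective δ := fun y =>
    (KaehlerDifferential.exact_kerCotangentToTensor_mapBaseChange B S B hsurj y).mp
      (Subsingleton.elim _ _)
  choose y hy using fun i => (hδ_surj.comp (Ideal.toCotangent_surjective _)) (b i)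
  have hδ_sum (c : Fin (Module.finrank S Ω[S⁄B]) → B) :
      δ (Ideal.toCotangent _ (∑ i, algebraMap B S (c i) • y i)) = ∑ i, c i • b i := by
    simp only [map_sum, map_smul]
    refine Finset.sum_congr rfl fun i _ => ?_
    rw [← hy i, ← algebraMap_smul B (algebraMap B S (c i)), hB]
    rfl
  refine ⟨fun i => y i, fun i => (y i).2, ?_, fun s hs => ?_⟩
  · rw [Fintype.linearIndependent_iff]
    intro c hc
    refine Fintype.linearIndependent_iff.mp b.linearIndependent c ?_
    rw [← hδ_sum, (Ideal.toCotangent_eq_zero _ _).mpr, map_zero]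
    rw [← Ideal.Quotient.eq_zero_iff_mem]
    simpa [Algebra.smul_def, ← Ideal.Quotient.algebraMap_eq, ← IsScalarTower.algebraMap_apply]
      using hc
  · let c := b.repr (δ (Ideal.toCotangent _ ⟨s, hs⟩))
    have hc : Ideal.toCotangent _ (⟨s, hs⟩ - ∑ i, algebraMap B S (c i) • y i) = 0 := by
      apply hδ_inj
      rw [map_sub, map_sub, hδ_sum, b.sum_repr, sub_self, map_zero]
    rw [Ideal.toCotangent_eq_zero] at hc
    rw [← add_sub_cancel (∑ i, algebraMap B S (c i) * (y i : S)) s]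
    refine Submodule.add_mem_sup (sum_mem fun i _ => ?_)
      (by simpa [Algebra.smul_def] using hc)
    exact Ideal.mul_mem_left _ _ (Ideal.subset_span ⟨i, rfl⟩)

theorem exists_isWeaklyRegular_ker_eq_span [IsNoetherianRing S] [IsLocalRing S] [Nontrivial B]
    [Algebra S B] [IsScalarTower B S B] [Module.Finite S Ω[S⁄B]] :
    ∃ x : Fin (Module.finrank S Ω[S⁄B]) → S,
      RingTheory.Sequence.IsWeaklyRegular S (List.ofFn x) ∧
      RingHom.ker (algebraMap S B) = Ideal.span (Set.range x) := by
  obtain ⟨x, hx, hind, hspan⟩ := exists_linearIndependent_mk_ker_sq (B := B) (S := S)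
  have hne : RingHom.ker (algebraMap S B) ≠ ⊤ := RingHom.ker_ne_top _
  have hker : RingHom.ker (algebraMap S B) = Ideal.span (Set.range x) := by
    refine le_antisymm ?_ (Ideal.span_le.mpr (Set.range_subset_iff.mpr hx))
    refine Submodule.le_of_le_smul_of_le_jacobson_bot (I := RingHom.ker (algebraMap S B))
      (IsNoetherian.noetherian _) ?_ (by rwa [smul_eq_mul, ← pow_two])
    rw [IsLocalRing.jacobson_eq_maximalIdeal _ bot_ne_top]
    exact IsLocalRing.le_maximalIdeal hne
  refine ⟨x, ?_, hker⟩
  rw [hker] at hind hne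
  exact (isFormalCoordinates_of_formallySmooth (σ := IsScalarTower.toAlgHom B S B) hker
    hind).isWeaklyRegular hne

end LocalRetraction

section Localization

/-- The ideal `I` is *locally a complete intersection of codimension `n`*: at every prime containing
`I` it is generated by a weakly regular sequence of length `n`. -/
def IsLocallyCompleteIntersection {R : Type*} [CommRing R] (I : Ideal R) (n : ℕ) : Prop :=
  ∀ (q : Ideal R) [q.IsPrime], I ≤ q → ∃ x : Fin n → Localization.AtPrime q,
    RingTheory.Sequence.IsWeaklyRegular (Localization.AtPrime q) (List.ofFn x) ∧
    I.map (algebraMap R (Localization.AtPrime q)) = Ideal.span (Set.range x)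

theorem finrank_kaehlerDifferential_localization {B R Bp : Type*} [CommRing B] [CommRing R]
    [CommRing Bp] [Algebra B R] [Algebra B Bp] (M : Submonoid B) [IsLocalization M Bp]
    (q : PrimeSpectrum R) [Algebra Bp (Localization.AtPrime q.asIdeal)]
    [IsScalarTower B Bp (Localization.AtPrime q.asIdeal)] :
    Module.finrank (Localization.AtPrime q.asIdeal) Ω[Localization.AtPrime q.asIdeal⁄Bp] =
      Module.rankAtStalk (R := R) Ω[R⁄B] q := by
  let S := Localization.AtPrime q.asIdeal
  have : Algebra.FormallyEtale B Bp := .of_isLocalization M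
  have hinj : Function.Injective (KaehlerDifferential.map B Bp S S) := by
    rw [injective_iff_map_eq_zero]
    intro ω hω
    obtain ⟨t, rfl⟩ := (KaehlerDifferential.exact_mapBaseChange_map B Bp S ω).mp hω
    rw [Subsingleton.elim t 0, map_zero]
  let e : LocalizedModule q.asIdeal.primeCompl Ω[R⁄B] ≃ₗ[R] Ω[S⁄B] :=
    IsLocalizedModule.linearEquiv q.asIdeal.primeCompl (LocalizedModule.mkLinearMap _ _)
      (KaehlerDifferential.map B B R S)
  rw [← (LinearEquiv.ofBijective _
    ⟨hinj, KaehlerDifferential.map_surjective B Bp S⟩).finrank_eq, Module.rankAtStalk,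
    (LinearEquiv.extendScalarsOfIsLocalization q.asIdeal.primeCompl S e).finrank_eq]

theorem ker_localRingHom_of_surjective {R B : Type*} [CommRing R] [CommRing B] {f : R →+* B}
    (hf : Function.Surjective f) {q : Ideal R} [q.IsPrime] {p : Ideal B} [p.IsPrime]
    (hqp : q = p.comap f) :
    RingHom.ker (Localization.localRingHom q p f hqp) =
      (RingHom.ker f).map (algebraMap R (Localization.AtPrime q)) := by
  refine IsLocalization.ker_map _ _ (SetLike.coe_injective ?_)
  subst hqp
  exact Set.image_preimage_eq (p : Set B)ᶜ hf

theorem isLocallyCompleteIntersection_ker_of_formallySmooth {B R : Type*} [CommRing B] [CommRing R]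
    [IsNoetherianRing R] [Algebra B R] [Algebra R B] [IsScalarTower B R B]
    [Algebra.EssFiniteType B R] [Algebra.FormallySmooth B R] {n : ℕ}
    (hn : ∀ q : PrimeSpectrum R, Module.rankAtStalk (R := R) Ω[R⁄B] q = n) :
    IsLocallyCompleteIntersection (RingHom.ker (algebraMap R B)) n := by
  intro q _ hq
  have hsurj : Function.Surjective (algebraMap R B) := fun b =>
    ⟨algebraMap B R b, (IsScalarTower.algebraMap_apply B R B b).symm⟩
  let p : Ideal B := q.map (algebraMap R B)
  have : p.IsPrime := Ideal.map_isPrime_of_surjective hsurj hq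
  have hqp : q = p.comap (algebraMap R B) := by
    rw [Ideal.comap_map_of_surjective' _ hsurj, sup_eq_left.mpr hq]
  have hpq : p = q.comap (algebraMap B R) := by
    conv_rhs => rw [hqp, Ideal.comap_comap, ← IsScalarTower.algebraMap_eq]
    exact (Ideal.comap_id p).symm
  have : p.LiesOver q := ⟨hqp⟩
  have : q.LiesOver p := ⟨hpq⟩
  let _ := Localization.AtPrime.algebraOfLiesOver q p
  let _ := Localization.AtPrime.algebraOfLiesOver p q
  have : Algebra.FormallySmooth R (Localization.AtPrime q) := .of_isLocalization q.primeCompl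
  have : Algebra.FormallySmooth B (Localization.AtPrime q) := .comp B R _
  have : Algebra.FormallySmooth (Localization.AtPrime p) (Localization.AtPrime q) :=
    .localization_base p.primeCompl
  have : Algebra.EssFiniteType B (Localization.AtPrime q) := .comp B R _
  have : Algebra.EssFiniteType (Localization.AtPrime p) (Localization.AtPrime q) := .of_comp B _ _
  have : IsScalarTower (Localization.AtPrime p) (Localization.AtPrime q)
      (Localization.AtPrime p) := by
    refine .of_algebraMap_eq' (IsLocalization.ringHom_ext p.primeCompl (RingHom.ext fun b => ?_))
    simp [Localization.AtPrime.IsLiesOverAlgebra.algebraMap_eq, Localization.localRingHom_to_map,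
      ← IsScalarTower.algebraMap_apply B R B]
  rw [← hn ⟨q, inferInstance⟩, ← finrank_kaehlerDifferential_localization
    (Bp := Localization.AtPrime p) p.primeCompl ⟨q, inferInstance⟩,
    ← ker_localRingHom_of_surjective hsurj hqp]
  exact exists_isWeaklyRegular_ker_eq_span

attribute [local instance] Algebra.TensorProduct.rightAlgebra in
theorem rankAtStalk_kaehlerDifferential_tensorProduct {A B C : Type*} [CommRing A] [CommRing B]
    [CommRing C] [Algebra A B] [Algebra A C] [Algebra.EssFiniteType A C]
    [Algebra.FormallySmooth A C] (q : PrimeSpectrum (B ⊗[A] C)) :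
    Module.rankAtStalk (R := B ⊗[A] C) Ω[B ⊗[A] C⁄B] q = Module.rankAtStalk (R := C) Ω[C⁄A]
      (q.comap (Algebra.TensorProduct.includeRight : C →ₐ[A] B ⊗[A] C).toRingHom) := by
  rw [← Module.rankAtStalk_eq_of_equiv (KaehlerDifferential.tensorKaehlerEquiv A B C (B ⊗[A] C)),
    Module.rankAtStalk_baseChange]
  rfl

end Localization

section ClearDenominators

open scoped Pointwise

theorem span_singleton_eq_of_associated {S : Type*} [CommRing S] {r s : S} (h : Associated r s) :
    Ideal.span {r} = Ideal.span {s} :=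
  le_antisymm (Ideal.span_singleton_le_span_singleton.mpr h.dvd')
    (Ideal.span_singleton_le_span_singleton.mpr h.dvd)

theorem ofList_eq_of_forall₂_associated {S : Type*} [CommRing S] {rs ss : List S}
    (h : List.Forall₂ Associated rs ss) : Ideal.ofList rs = Ideal.ofList ss := by
  induction h with
  | nil => rfl
  | cons hrs _ ih =>
    rw [Ideal.ofList_cons, Ideal.ofList_cons, ih, span_singleton_eq_of_associated hrs]

theorem isWeaklyRegular_of_forall₂_associated {S M : Type*} [CommRing S] [AddCommGroup M]
    [Module S M] {rs ss : List S} (h : List.Forall₂ Associated rs ss)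
    (hrs : RingTheory.Sequence.IsWeaklyRegular M rs) :
    RingTheory.Sequence.IsWeaklyRegular M ss := by
  induction h generalizing M with
  | nil => exact .nil S M
  | @cons r s _ _ hrs' _ ih =>
    obtain ⟨hr, hreg⟩ := (RingTheory.Sequence.isWeaklyRegular_cons_iff M r _).mp hrs
    have htop : (r • ⊤ : Submodule S M) = s • ⊤ := by
      rw [← Submodule.ideal_span_singleton_smul, ← Submodule.ideal_span_singleton_smul,
        span_singleton_eq_of_associated hrs']
    refine .cons ?_ (((Submodule.quotEquivOfEq _ _ htop).isWeaklyRegular_congr _).mp (ih hreg))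
    obtain ⟨u, rfl⟩ := hrs'
    exact hr.mul (u.isSMulRegular M)

theorem IsLocallyCompleteIntersection.exists_isWeaklyRegular {R : Type*} [CommRing R] {I : Ideal R}
    {n : ℕ} (hI : IsLocallyCompleteIntersection I n) (q : Ideal R) [q.IsPrime] (hq : I ≤ q) :
    ∃ rs : List R, rs.length = n ∧ Ideal.ofList rs ≤ I ∧
      RingTheory.Sequence.IsWeaklyRegular (Localization.AtPrime q) rs ∧
      I.map (algebraMap R (Localization.AtPrime q)) =
        (Ideal.ofList rs).map (algebraMap R (Localization.AtPrime q)) := by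
  obtain ⟨x, hreg, hspan⟩ := hI q hq
  have hx (i : Fin n) : ∃ a ∈ I, Associated (x i) (algebraMap R (Localization.AtPrime q) a) := by
    have hxi : x i ∈ I.map (algebraMap R (Localization.AtPrime q)) :=
      hspan ▸ Ideal.subset_span ⟨i, rfl⟩
    obtain ⟨⟨a, s⟩, has⟩ := (IsLocalization.mem_map_algebraMap_iff q.primeCompl _).mp hxi
    exact ⟨a, a.2, (IsLocalization.map_units _ s).unit, has⟩
  choose a haI hxa using hx
  have hassoc : List.Forall₂ Associated (List.ofFn x)
      ((List.ofFn a).map (algebraMap R (Localization.AtPrime q))) := by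
    rw [List.map_ofFn, List.forall₂_iff_get]
    simpa using fun i hi => hxa ⟨i, hi⟩
  refine ⟨List.ofFn a, List.length_ofFn, ?_, ?_, ?_⟩
  · rw [Ideal.ofList, Ideal.span_le]
    rintro _ hr
    obtain ⟨i, rfl⟩ := (List.mem_ofFn' _ _).mp hr
    exact haI i
  · exact (RingTheory.Sequence.isWeaklyRegular_map_algebraMap_iff _ _ _).mp
      (isWeaklyRegular_of_forall₂_associated hassoc hreg)
  · rw [Ideal.map_ofList, ← ofList_eq_of_forall₂_associated hassoc, hspan]
    simp [Ideal.ofList, List.mem_ofFn, Set.range]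

end ClearDenominators

section ExtLocalization

theorem isLocalizedModule_compRight {R X M M' : Type*} [CommRing R] [AddCommGroup X] [Module R X]
    [AddCommGroup M] [Module R M] [AddCommGroup M'] [Module R M'] [Module.FinitePresentation R X]
    (S : Submonoid R) (g : M →ₗ[R] M') [IsLocalizedModule S g] :
    IsLocalizedModule S (LinearMap.compRight R g : (X →ₗ[R] M) →ₗ[R] (X →ₗ[R] M')) where
  map_units s := by
    obtain ⟨v, hvs, hsv⟩ := isUnit_iff_exists.mp (IsLocalizedModule.map_units g s)
    refine isUnit_iff_exists.mpr ⟨LinearMap.compRight R v, ?_, ?_⟩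
    · ext f x
      exact LinearMap.congr_fun hvs (f x)
    · ext f x
      exact LinearMap.congr_fun hsv (f x)
  surj f := by
    obtain ⟨h, s, hs⟩ := Module.FinitePresentation.exists_lift_of_isLocalizedModule S g f
    exact ⟨(h, s), hs.symm⟩
  exists_of_eq h := Module.Finite.exists_smul_of_comp_eq_of_isLocalizedModule S g _ _ h

theorem isLocalizedModule_of_exact {R M₁ M₂ M₃ N₁ N₂ N₃ : Type*} [CommRing R] [AddCommGroup M₁]
    [AddCommGroup M₂] [AddCommGroup M₃] [AddCommGroup N₁] [AddCommGroup N₂] [AddCommGroup N₃]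
    [Module R M₁] [Module R M₂] [Module R M₃] [Module R N₁] [Module R N₂] [Module R N₃]
    (S : Submonoid R) {f : M₁ →ₗ[R] M₂} {g : M₂ →ₗ[R] M₃} {f' : N₁ →ₗ[R] N₂} {g' : N₂ →ₗ[R] N₃}
    {a : M₁ →ₗ[R] N₁} {b : M₂ →ₗ[R] N₂} {c : M₃ →ₗ[R] N₃} [IsLocalizedModule S a]
    [IsLocalizedModule S b] (hfg : Function.Exact f g) (hg : Function.Surjective g)
    (hfg' : Function.Exact f' g') (hg' : Function.Surjective g') (hab : b ∘ₗ f = f' ∘ₗ a)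
    (hbc : c ∘ₗ g = g' ∘ₗ b) : IsLocalizedModule S c where
  map_units s := by
    have ha := (Module.End.isUnit_iff _).mp (IsLocalizedModule.map_units a s)
    have hb := (Module.End.isUnit_iff _).mp (IsLocalizedModule.map_units b s)
    simp only [Module.algebraMap_end_eq_smul_id] at ha hb ⊢
    rw [Module.End.isUnit_iff]
    refine ⟨(injective_iff_map_eq_zero _).mpr fun z hz => ?_, fun z => ?_⟩
    · obtain ⟨y, rfl⟩ := hg' z
      obtain ⟨x, hx⟩ := (hfg' ((s : R) • y)).mp (by simpa using hz)
      obtain ⟨x, rfl⟩ := ha.2 x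
      have hxy : f' x = y := hb.1 (by simpa using hx)
      rw [← hxy, hfg'.apply_apply_eq_zero]
    · obtain ⟨y, rfl⟩ := hg' z
      obtain ⟨y, rfl⟩ := hb.2 y
      exact ⟨g' y, (map_smul g' (s : R) y).symm⟩
  surj z := by
    obtain ⟨y, rfl⟩ := hg' z
    obtain ⟨⟨m, s⟩, hm⟩ := IsLocalizedModule.surj S b y
    refine ⟨(g m, s), ?_⟩
    simp only [Submonoid.smul_def] at hm ⊢
    rw [← map_smul, hm]
    exact (LinearMap.congr_fun hbc m).symm
  exists_of_eq {z₁ z₂} hz := by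
    obtain ⟨y, hy⟩ := hg (z₁ - z₂)
    have hby : g' (b y) = 0 := by
      rw [← LinearMap.comp_apply, ← hbc, LinearMap.comp_apply, hy, map_sub, hz, sub_self]
    obtain ⟨x, hx⟩ := (hfg' _).mp hby
    obtain ⟨⟨m, s⟩, hm⟩ := IsLocalizedModule.surj S a x
    have hbm : b ((s : R) • y) = b (f m) := by
      rw [← LinearMap.comp_apply b f, hab, LinearMap.comp_apply, ← hm, Submonoid.smul_def,
        map_smul, map_smul, hx]
    obtain ⟨t, ht⟩ := IsLocalizedModule.exists_of_eq (S := S) hbm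
    refine ⟨t * s, sub_eq_zero.mp ?_⟩
    rw [← smul_sub, ← hy, mul_smul]
    simp only [Submonoid.smul_def] at ht ⊢
    rw [← map_smul, ← map_smul, ht, map_smul, hfg.apply_apply_eq_zero, smul_zero]

variable {R : Type u} [CommRing R]

/-- The map `Extⁱ(X, M) → Extⁱ(X, M')` induced by `g : M ⟶ M'`. -/
noncomputable abbrev extPostcomp (X : ModuleCat.{u} R) {M M' : ModuleCat.{u} R} (g : M ⟶ M')
    (i : ℕ) : Abelian.Ext X M i →ₗ[R] Abelian.Ext X M' i :=
  (Abelian.Ext.mk₀ g).postcompOfLinear R X (add_zero i)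

theorem isLocalizedModule_extPostcomp [IsNoetherianRing R] (S : Submonoid R)
    {M M' : ModuleCat.{u} R} (g : M ⟶ M') [IsLocalizedModule S g.hom] (X : ModuleCat.{u} R)
    [Module.Finite R X] (i : ℕ) : IsLocalizedModule S (extPostcomp X g i) := by
  induction i generalizing X with
  | zero =>
    have := Module.finitePresentation_of_finite R X
    have := isLocalizedModule_compRight (X := X) S g.hom
    let e (Y : ModuleCat.{u} R) : (X →ₗ[R] Y) ≃ₗ[R] Abelian.Ext X Y 0 :=
      ModuleCat.homLinearEquiv.symm.trans Abelian.Ext.linearEquiv₀.symm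
    convert! (inferInstance : IsLocalizedModule S
      (((e M').toLinearMap ∘ₗ LinearMap.compRight R g.hom) ∘ₗ (e M).symm.toLinearMap))
    ext h
    obtain ⟨h, rfl⟩ := (e M).surjective h
    simp only [LinearMap.comp_apply, LinearEquiv.coe_coe, LinearEquiv.symm_apply_apply]
    exact Abelian.Ext.mk₀_comp_mk₀ _ _
  | succ i ih =>
    obtain ⟨F, _, _, _, _, f, surjf⟩ := Module.exists_finite_presentation R X
    have hT := LinearMap.shortExact_shortComplexKer surjf
    have : Module.Projective R f.shortComplexKer.X₂ := inferInstanceAs (Module.Projective R F)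
    have : Projective f.shortComplexKer.X₂ := inferInstance
    have : Module.Finite R f.shortComplexKer.X₁ :=
      inferInstanceAs (Module.Finite R (LinearMap.ker f))
    have : Module.Finite R f.shortComplexKer.X₂ := inferInstanceAs (Module.Finite R F)
    have := ih f.shortComplexKer.X₁
    have := ih f.shortComplexKer.X₂
    have hexact (Y : ModuleCat.{u} R) : Function.Exact
        ((Abelian.Ext.mk₀ f.shortComplexKer.f).precompOfLinear R Y (zero_add i))
        (hT.extClass.precompOfLinear R Y (add_comm 1 i)) :=
      (ShortComplex.ab_exact_iff_function_exact _).mp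
        (Abelian.Ext.contravariant_sequence_exact₁' hT Y i (i + 1) (add_comm 1 i))
    refine isLocalizedModule_of_exact S (a := extPostcomp f.shortComplexKer.X₂ g i)
      (b := extPostcomp f.shortComplexKer.X₁ g i)
      (hexact M) (precomp_extClass_surjective_of_projective_X₂ M hT i) (hexact M')
      (precomp_extClass_surjective_of_projective_X₂ M' hT i)
      (LinearMap.ext fun e => Abelian.Ext.comp_assoc_of_third_deg_zero _ e _ (zero_add i))
      (LinearMap.ext fun e => Abelian.Ext.comp_assoc_of_third_deg_zero _ e _ (add_comm 1 i))

end ExtLocalization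

section Rees

variable {R : Type u} [CommRing R] {X M : ModuleCat.{u} R}

theorem ext_smul_eq_zero_of_mem_annihilator {r : R} (hr : r ∈ Module.annihilator R X) {i : ℕ}
    (e : Abelian.Ext X M i) : r • e = 0 := by
  have hX : r • 𝟙 X = 0 := by
    rw [← ModuleCat.lsmul_eq_smul_id, Module.mem_annihilator_iff_lsmul_eq_zero.mp hr,
      ModuleCat.ofHom_zero]
  rw [← Abelian.Ext.mk₀_id_comp e, ← Abelian.Ext.smul_comp, ← Abelian.Ext.mk₀_smul, hX,
    Abelian.Ext.mk₀_zero, Abelian.Ext.zero_comp]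

theorem postcomp_extClass_smulShortComplex_surjective {r : R} (hr : r ∈ Module.annihilator R X)
    (hM : IsSMulRegular M r) (i : ℕ) :
    Function.Surjective (hM.smulShortComplex_shortExact.extClass.postcompOfLinear R X
      (rfl : i + 1 = i + 1)) := by
  intro e
  refine Abelian.Ext.covariant_sequence_exact₁ X hM.smulShortComplex_shortExact e ?_ rfl
  rw [ModuleCat.smulShortComplex_f_eq_smul_id]
  exact (Abelian.Ext.smul_eq_comp_mk₀ e r).symm.trans (ext_smul_eq_zero_of_mem_annihilator hr e)

theorem subsingleton_ext_of_isWeaklyRegular {rs : List R}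
    (hrs : Ideal.ofList rs ≤ Module.annihilator R X)
    (hM : RingTheory.Sequence.IsWeaklyRegular M rs) {i : ℕ} (hi : i < rs.length) :
    Subsingleton (Abelian.Ext X M i) := by
  induction rs generalizing M i with
  | nil => simp at hi
  | cons r rs ih =>
    rw [Ideal.ofList_cons, sup_le_iff, Ideal.span_singleton_le_iff_mem] at hrs
    obtain ⟨hr, hreg⟩ := (RingTheory.Sequence.isWeaklyRegular_cons_iff M r rs).mp hM
    cases i with
    | zero =>
      have := IsSMulRegular.linearMap_subsingleton_of_mem_annihilator hr hrs.1
      exact (Abelian.Ext.addEquiv₀.trans ModuleCat.homAddEquiv).subsingleton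
    | succ i =>
      have : Subsingleton (Abelian.Ext X (M.smulShortComplex r).X₃ i) :=
        ih (M := ModuleCat.of R (QuotSMulTop r M)) hrs.2 hreg (Nat.lt_of_succ_lt_succ hi)
      exact (postcomp_extClass_smulShortComplex_surjective hrs.1 hr i).subsingleton

theorem nonempty_ext_linearEquiv_of_isWeaklyRegular {rs : List R}
    (hrs : Ideal.ofList rs ≤ Module.annihilator R X)
    (hM : RingTheory.Sequence.IsWeaklyRegular M rs) :
    Nonempty (Abelian.Ext X M rs.length ≃ₗ[R]
      (X →ₗ[R] M ⧸ (Ideal.ofList rs • ⊤ : Submodule R M))) := by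
  induction rs generalizing M with
  | nil =>
    let e : (M ⧸ (Ideal.ofList ([] : List R) • ⊤ : Submodule R M)) ≃ₗ[R] M :=
      Submodule.quotEquivOfEqBot _ (by simp)
    exact ⟨(Abelian.Ext.linearEquiv₀.trans ModuleCat.homLinearEquiv).trans
      (LinearEquiv.congrRight e.symm)⟩
  | cons r rs ih =>
    have hrs' := hrs
    rw [Ideal.ofList_cons, sup_le_iff, Ideal.span_singleton_le_iff_mem] at hrs'
    obtain ⟨hr, hreg⟩ := (RingTheory.Sequence.isWeaklyRegular_cons_iff M r rs).mp hM
    obtain ⟨e⟩ := ih (M := ModuleCat.of R (QuotSMulTop r M)) hrs'.2 hreg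
    have hinj : Function.Injective (hr.smulShortComplex_shortExact.extClass.postcompOfLinear R X
        (rfl : rs.length + 1 = rs.length + 1)) := by
      rw [injective_iff_map_eq_zero]
      intro y hy
      have : Subsingleton (Abelian.Ext X (M.smulShortComplex r).X₂ rs.length) :=
        subsingleton_ext_of_isWeaklyRegular (M := M) hrs hM (Nat.lt_succ_self _)
      obtain ⟨z, rfl⟩ :=
        Abelian.Ext.covariant_sequence_exact₃ X hr.smulShortComplex_shortExact y rfl hy
      rw [Subsingleton.elim z 0, Abelian.Ext.zero_comp]
    let δ := LinearEquiv.ofBijective _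
      ⟨hinj, postcomp_extClass_smulShortComplex_surjective hrs'.1 hr rs.length⟩
    exact ⟨(δ.symm.trans e).trans (LinearEquiv.congrRight
      (Submodule.quotOfListConsSMulTopEquivQuotSMulTopInner M r rs).symm)⟩

end Rees

section LocalStructure

variable {R B : Type u} [CommRing R] [CommRing B] [Algebra R B]

theorem annihilator_eq_ker_algebraMap {R B : Type*} [CommRing R] [CommRing B] [Algebra R B] :
    Module.annihilator R B = RingHom.ker (algebraMap R B) := by
  ext r
  simp only [Module.mem_annihilator, Algebra.smul_def, RingHom.mem_ker]
  exact ⟨fun h => by simpa using h 1, fun h b => by rw [h, zero_mul]⟩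

theorem algebraMapSubmonoid_under_primeCompl {R B : Type*} [CommRing R] [CommRing B] [Algebra R B]
    (hsurj : Function.Surjective (algebraMap R B)) (p : Ideal B) [p.IsPrime] :
    Algebra.algebraMapSubmonoid B (p.under R).primeCompl = p.primeCompl :=
  SetLike.coe_injective (Set.image_preimage_eq (p : Set B)ᶜ hsurj)

theorem isLocalizedModule_under_primeCompl {R B : Type*} [CommRing R] [CommRing B] [Algebra R B]
    (hsurj : Function.Surjective (algebraMap R B)) (p : Ideal B) [p.IsPrime] :
    IsLocalizedModule (p.under R).primeCompl
      (IsScalarTower.toAlgHom R B (Localization.AtPrime p)).toLinearMap := by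
  rw [isLocalizedModule_iff_isLocalization, algebraMapSubmonoid_under_primeCompl hsurj]
  infer_instance

theorem exists_isLocalizedModule_quotient_map {R B : Type*} [CommRing R] [CommRing B] [Algebra R B]
    (hsurj : Function.Surjective (algebraMap R B)) (q : Ideal R) [q.IsPrime] :
    ∃ g : B →ₗ[R] Localization.AtPrime q ⧸
        (RingHom.ker (algebraMap R B)).map (algebraMap R (Localization.AtPrime q)),
      IsLocalizedModule q.primeCompl g := by
  let I := RingHom.ker (algebraMap R B)
  let e : B ≃ₗ[R] R ⧸ I := ((Algebra.linearMap R B).quotKerEquivOfSurjective hsurj).symm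
  let g := I.toLocalizedQuotient' (Localization.AtPrime q) q.primeCompl
    (Algebra.linearMap R (Localization.AtPrime q))
  have hI := Ideal.localized'_eq_map (Localization.AtPrime q) q.primeCompl I
  rw [← hI]
  exact ⟨g ∘ₗ e.toLinearMap, inferInstance⟩

theorem hasProjectiveDimensionLE_quotient_of_isWeaklyRegular {S : Type u} [CommRing S]
    [IsLocalRing S] [IsNoetherianRing S] {rs : List S}
    (hrs : RingTheory.Sequence.IsWeaklyRegular S rs)
    (hmem : ∀ r ∈ rs, r ∈ IsLocalRing.maximalIdeal S) :
    HasProjectiveDimensionLE (ModuleCat.of S (S ⧸ (Ideal.ofList rs • ⊤ : Ideal S)))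
      rs.length := by
  have hpd := ModuleCat.projectiveDimension_quotient_eq_add_length_of_isWeaklyRegular
    (ModuleCat.of S S) rs hrs hmem
  rw [ModuleCat.projectiveDimension_eq_zero_of_projective (ModuleCat.of S S), zero_add] at hpd
  exact (projectiveDimension_le_iff _ _).mp hpd.le

theorem hasProjectiveDimensionLE_of_isLocallyCompleteIntersection [IsNoetherianRing R] {n : ℕ}
    (hsurj : Function.Surjective (algebraMap R B))
    (hI : IsLocallyCompleteIntersection (RingHom.ker (algebraMap R B)) n) :
    HasProjectiveDimensionLE (ModuleCat.of R B) n := by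
  have : Module.Finite R (ModuleCat.of R B) :=
    Module.Finite.of_surjective (Algebra.linearMap R B) hsurj
  rw [ModuleCat.hasProjectiveDimensionLE_iff_forall_primeSpectrum]
  intro q
  let f := (ModuleCat.of R B).localizedModuleMkLinearMap q.asIdeal.primeCompl
  have : IsLocalizedModule q.asIdeal.primeCompl f :=
    ModuleCat.localizedModule_isLocalizedModule _ _
  by_cases hq : RingHom.ker (algebraMap R B) ≤ q.asIdeal
  · obtain ⟨rs, rfl, hrsI, hreg, hspan⟩ := hI.exists_isWeaklyRegular q.asIdeal hq
    let S := Localization.AtPrime q.asIdeal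
    let rs' := rs.map (algebraMap R S)
    have hmem : ∀ r ∈ rs', r ∈ IsLocalRing.maximalIdeal S := by
      intro r' hr'
      obtain ⟨r, hr, rfl⟩ := List.mem_map.mp hr'
      rw [IsLocalization.AtPrime.to_map_mem_maximal_iff _ q.asIdeal]
      exact hq (hrsI (Ideal.subset_span hr))
    have hpd := hasProjectiveDimensionLE_quotient_of_isWeaklyRegular
      ((RingTheory.Sequence.isWeaklyRegular_map_algebraMap_iff _ _ _).mpr hreg) hmem
    rw [List.length_map] at hpd
    obtain ⟨g, _⟩ := exists_isLocalizedModule_quotient_map hsurj q.asIdeal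
    have hJ : (Ideal.ofList rs' • ⊤ : Ideal S) =
        (RingHom.ker (algebraMap R B)).map (algebraMap R S) := by
      rw [smul_eq_mul, Ideal.mul_top, hspan, Ideal.map_ofList]
    let e := (Submodule.quotEquivOfEq _ _ hJ).trans
      (IsLocalizedModule.linearEquiv q.asIdeal.primeCompl g f |>.extendScalarsOfIsLocalization
        q.asIdeal.primeCompl S)
    exact hasProjectiveDimensionLT_of_iso e.toModuleIso _
  · obtain ⟨r, hr, hrq⟩ := SetLike.not_le_iff_exists.mp hq
    have : Subsingleton ((ModuleCat.of R B).localizedModule q.asIdeal.primeCompl) := by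
      rw [IsLocalizedModule.subsingleton_iff q.asIdeal.primeCompl f]
      rw [← annihilator_eq_ker_algebraMap] at hr
      exact fun b => ⟨r, hrq, Module.mem_annihilator.mp hr b⟩
    have := (ModuleCat.isZero_of_subsingleton
      ((ModuleCat.of R B).localizedModule q.asIdeal.primeCompl)).hasProjectiveDimensionLT_zero
    exact hasProjectiveDimensionLT_of_ge _ 0 _ (Nat.zero_le _)

variable {n : ℕ}

theorem nonempty_ext_localization_linearEquiv
    (hsurj : Function.Surjective (algebraMap R B))
    (hI : IsLocallyCompleteIntersection (RingHom.ker (algebraMap R B)) n)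
    (p : Ideal B) [p.IsPrime] :
    Nonempty (Abelian.Ext (ModuleCat.of R B)
      (ModuleCat.of R (Localization.AtPrime (p.under R))) n ≃ₗ[R] Localization.AtPrime p) := by
  have hIq : RingHom.ker (algebraMap R B) ≤ p.under R := Ideal.comap_mono bot_le
  obtain ⟨rs, rfl, hrsI, hreg, hspan⟩ := hI.exists_isWeaklyRegular (p.under R) hIq
  rw [← annihilator_eq_ker_algebraMap] at hrsI
  obtain ⟨e⟩ := nonempty_ext_linearEquiv_of_isWeaklyRegular (X := ModuleCat.of R B)
    (M := ModuleCat.of R (Localization.AtPrime (p.under R))) hrsI hreg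
  obtain ⟨g, _⟩ := exists_isLocalizedModule_quotient_map hsurj (p.under R)
  have := isLocalizedModule_under_primeCompl hsurj p
  have hJ : (Ideal.ofList rs • ⊤ : Submodule R (Localization.AtPrime (p.under R))) =
      ((RingHom.ker (algebraMap R B)).map (algebraMap R _)).restrictScalars R := by
    rw [Ideal.smul_top_eq_map, hspan]
  let eQ := (Submodule.quotEquivOfEq _ _ hJ).trans (Submodule.Quotient.restrictScalarsEquiv R _)
  let eB := IsLocalizedModule.linearEquiv (p.under R).primeCompl g
    (IsScalarTower.toAlgHom R B (Localization.AtPrime p)).toLinearMap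
  exact ⟨e.trans ((LinearEquiv.congrRight (eQ.trans eB)).trans
    ((LinearMap.extendScalarsOfSurjectiveEquiv hsurj).trans
      ((LinearMap.ringLmapEquivSelf B B _).restrictScalars R)))⟩

variable [IsNoetherianRing R]

theorem isLocalizedModule_extPostcomp_localization (q : Ideal R) [q.IsPrime]
    (X : ModuleCat.{u} R) [Module.Finite R X] (i : ℕ) :
    IsLocalizedModule q.primeCompl (extPostcomp X
      (ModuleCat.ofHom (Algebra.linearMap R (Localization.AtPrime q))) i) := by
  have : IsLocalizedModule q.primeCompl
      (ModuleCat.ofHom (Algebra.linearMap R (Localization.AtPrime q))).hom :=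
    inferInstanceAs (IsLocalizedModule _ (Algebra.linearMap R _))
  exact isLocalizedModule_extPostcomp _ _ _ _

theorem exists_isLocalizedModule_ext
    (hsurj : Function.Surjective (algebraMap R B))
    (hI : IsLocallyCompleteIntersection (RingHom.ker (algebraMap R B)) n)
    (p : Ideal B) [p.IsPrime] :
    ∃ f : Abelian.Ext (ModuleCat.of R B) (ModuleCat.of R R) n →ₗ[R] Localization.AtPrime p,
      IsLocalizedModule (p.under R).primeCompl f := by
  obtain ⟨e⟩ := nonempty_ext_localization_linearEquiv hsurj hI p
  have : Module.Finite R (ModuleCat.of R B) :=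
    Module.Finite.of_surjective (Algebra.linearMap R B) hsurj
  let f := extPostcomp (ModuleCat.of R B)
    (ModuleCat.ofHom (Algebra.linearMap R (Localization.AtPrime (p.under R)))) n
  have : IsLocalizedModule (p.under R).primeCompl f :=
    isLocalizedModule_extPostcomp_localization (p.under R) (ModuleCat.of R B) n
  exact ⟨e.toLinearMap ∘ₗ f, inferInstance⟩

theorem subsingleton_ext_of_isLocallyCompleteIntersection
    (hsurj : Function.Surjective (algebraMap R B))
    (hI : IsLocallyCompleteIntersection (RingHom.ker (algebraMap R B)) n) {i : ℕ} (hi : i ≠ n) :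
    Subsingleton (Abelian.Ext (ModuleCat.of R B) (ModuleCat.of R R) i) := by
  obtain hin | hni := hi.lt_or_gt
  · have : Module.Finite R (ModuleCat.of R B) :=
      Module.Finite.of_surjective (Algebra.linearMap R B) hsurj
    rw [subsingleton_iff_forall_eq 0]
    intro e
    suffices LinearMap.ker (LinearMap.toSpanSingleton R _ e) = ⊤ by
      simpa using (Ideal.eq_top_iff_one _).mp this
    by_contra hne
    obtain ⟨q, _, hq⟩ := Ideal.exists_le_maximal _ hne
    have hIq : RingHom.ker (algebraMap R B) ≤ q :=
      annihilator_eq_ker_algebraMap.ge.trans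
        (fun _ hr => hq (ext_smul_eq_zero_of_mem_annihilator hr e))
    obtain ⟨rs, rfl, hrsI, hreg, -⟩ := hI.exists_isWeaklyRegular q hIq
    rw [← annihilator_eq_ker_algebraMap] at hrsI
    have hsub := subsingleton_ext_of_isWeaklyRegular (X := ModuleCat.of R B)
      (M := ModuleCat.of R (Localization.AtPrime q)) hrsI hreg hin
    let f := extPostcomp (ModuleCat.of R B)
      (ModuleCat.ofHom (Algebra.linearMap R (Localization.AtPrime q))) i
    have : IsLocalizedModule q.primeCompl f :=
      isLocalizedModule_extPostcomp_localization q (ModuleCat.of R B) i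
    obtain ⟨r, hrq, hre⟩ := (IsLocalizedModule.subsingleton_iff q.primeCompl f).mp hsub e
    exact hrq (hq hre)
  · have := hasProjectiveDimensionLE_of_isLocallyCompleteIntersection hsurj hI
    exact HasProjectiveDimensionLT.subsingleton _ (n + 1) i hni _

end LocalStructure

section Invertible

variable {R D : Type*} [CommRing R] [AddCommGroup D] [Module R D]

theorem exists_dual_apply_notMem [Module.FinitePresentation R D] (p : Ideal R) [p.IsPrime]
    (f : D →ₗ[R] Localization.AtPrime p) [IsLocalizedModule p.primeCompl f] :
    ∃ (φ : Module.Dual R D) (d : D), φ d ∉ p := by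
  have := isLocalizedModule_compRight (X := D) p.primeCompl
    (Algebra.linearMap R (Localization.AtPrime p))
  obtain ⟨⟨φ, t⟩, htφ⟩ := IsLocalizedModule.surj p.primeCompl
    (LinearMap.compRight (M := D) R (Algebra.linearMap R (Localization.AtPrime p))) f
  obtain ⟨⟨d, s⟩, hsd⟩ := IsLocalizedModule.surj p.primeCompl f 1
  refine ⟨φ, d, ?_⟩
  have h : algebraMap R (Localization.AtPrime p) (φ d) = algebraMap R _ (t * s : R) := by
    calc algebraMap R (Localization.AtPrime p) (φ d) = (t : R) • f d :=
        (LinearMap.congr_fun htφ d).symm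
      _ = (t : R) • (s : R) • (1 : Localization.AtPrime p) := by rw [← hsd]; rfl
      _ = algebraMap R _ (t * s : R) := by rw [smul_smul, Algebra.algebraMap_eq_smul_one]
  change φ d ∈ p.primeCompl
  rw [← IsLocalization.AtPrime.isUnit_to_map_iff (Localization.AtPrime p) p, h,
    IsLocalization.AtPrime.isUnit_to_map_iff (Localization.AtPrime p) p]
  exact (t * s).2

theorem dual_smul_comm_of_isLocalizedModule
    (hD : ∀ (p : Ideal R) [p.IsMaximal], ∃ f : D →ₗ[R] Localization.AtPrime p,
      IsLocalizedModule p.primeCompl f) (φ : Module.Dual R D) (x y : D) :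
    φ x • y = φ y • x := by
  choose f hf using hD
  refine Module.eq_of_localization_maximal (fun p [p.IsMaximal] => Localization.AtPrime p) f _ _
    fun p _ => ?_
  let φp := (IsLocalizedModule.map p.primeCompl (f p)
    (Algebra.linearMap R (Localization.AtPrime p)) φ).extendScalarsOfIsLocalization
      p.primeCompl (Localization.AtPrime p)
  have h (z : D) : algebraMap R (Localization.AtPrime p) (φ z) = f p z * φp 1 := by
    rw [← smul_eq_mul, ← map_smul, smul_eq_mul, mul_one]
    exact (IsLocalizedModule.map_apply p.primeCompl (f p) (Algebra.linearMap R _) φ z).symm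
  rw [map_smul, map_smul, Algebra.smul_def, Algebra.smul_def, h, h]
  ring

theorem contractLeft_smul_comm (hD : ∀ (φ : Module.Dual R D) (x y : D), φ x • y = φ y • x)
    (z w : Module.Dual R D ⊗[R] D) : contractLeft R D z • w = contractLeft R D w • z := by
  induction z with
  | zero => simp
  | add z₁ z₂ h₁ h₂ => rw [map_add, add_smul, h₁, h₂, smul_add]
  | tmul φ x =>
    induction w with
    | zero => simp
    | add w₁ w₂ h₁ h₂ => rw [map_add, add_smul, smul_add, h₁, h₂]
    | tmul ψ y =>
      have hφψ : φ x • ψ = ψ x • φ := by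
        ext d
        simpa [mul_comm] using congrArg ψ (hD φ x d)
      rw [contractLeft_apply, contractLeft_apply, TensorProduct.smul_tmul', hφψ,
        TensorProduct.smul_tmul, hD ψ x y, TensorProduct.tmul_smul]

theorem invertible_of_isLocalizedModule [Module.FinitePresentation R D]
    (hD : ∀ (p : Ideal R) [p.IsMaximal], ∃ f : D →ₗ[R] Localization.AtPrime p,
      IsLocalizedModule p.primeCompl f) : Module.Invertible R D := by
  have hsurj : Function.Surjective (contractLeft R D) := by
    rw [← LinearMap.range_eq_top]
    by_contra hne
    obtain ⟨p, _, hp⟩ := Ideal.exists_le_maximal _ hne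
    obtain ⟨f, _⟩ := hD p
    obtain ⟨φ, d, hφd⟩ := exists_dual_apply_notMem p f
    exact hφd (hp ⟨φ ⊗ₜ d, contractLeft_apply φ d⟩)
  refine ⟨⟨(injective_iff_map_eq_zero _).mpr fun z hz => ?_, hsurj⟩⟩
  obtain ⟨w, hw⟩ := hsurj 1
  rw [← one_smul R z, ← hw,
    contractLeft_smul_comm (dual_smul_comm_of_isLocalizedModule hD), hz, zero_smul]

end Invertible

section ExtOfSection

variable {R B : Type u} [CommRing R] [CommRing B] [Algebra B R] [Algebra R B] [IsScalarTower B R B]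

theorem isScalarTower_ext {M : ModuleCat.{u} R} {i : ℕ}
    [Module B (Abelian.Ext (ModuleCat.of R B) M i)]
    [IsScalarTower B R (Abelian.Ext (ModuleCat.of R B) M i)] :
    IsScalarTower R B (Abelian.Ext (ModuleCat.of R B) M i) := by
  refine IsScalarTower.of_algebraMap_smul fun r e => ?_
  rw [← algebraMap_smul R (algebraMap R B r) e, ← sub_eq_zero, ← sub_smul]
  refine ext_smul_eq_zero_of_mem_annihilator ?_ e
  rw [annihilator_eq_ker_algebraMap (R := R) (B := B), RingHom.mem_ker, map_sub,
    ← IsScalarTower.algebraMap_apply B R B, Algebra.algebraMap_self_apply, sub_self]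

theorem invertible_ext_of_isLocallyCompleteIntersection [IsNoetherianRing R] {n : ℕ}
    (hI : IsLocallyCompleteIntersection (RingHom.ker (algebraMap R B)) n)
    [Module B (Abelian.Ext (ModuleCat.of R B) (ModuleCat.of R R) n)]
    [IsScalarTower B R (Abelian.Ext (ModuleCat.of R B) (ModuleCat.of R R) n)] :
    Module.Invertible B (Abelian.Ext (ModuleCat.of R B) (ModuleCat.of R R) n) := by
  have hsurj : Function.Surjective (algebraMap R B) := fun b =>
    ⟨algebraMap B R b, (IsScalarTower.algebraMap_apply B R B b).symm⟩
  have := isNoetherianRing_of_surjective R B (algebraMap R B) hsurj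
  have := isScalarTower_ext (B := B) (M := ModuleCat.of R R) (i := n)
  have : Module.Finite R (ModuleCat.of R B) :=
    Module.Finite.of_surjective (Algebra.linearMap R B) hsurj
  have : Module.Finite R (ModuleCat.of R R) := inferInstanceAs (Module.Finite R R)
  have : Module.Finite R (Abelian.Ext (ModuleCat.of R B) (ModuleCat.of R R) n) :=
    ModuleCat.finite_ext _ _ _ _
  have := Module.Finite.of_restrictScalars_finite R B
    (Abelian.Ext (ModuleCat.of R B) (ModuleCat.of R R) n)
  have := Module.finitePresentation_of_finite B
    (Abelian.Ext (ModuleCat.of R B) (ModuleCat.of R R) n)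
  refine invertible_of_isLocalizedModule fun p _ => ?_
  obtain ⟨f, hf⟩ := exists_isLocalizedModule_ext hsurj hI p
  have : IsLocalizedModule (p.under R).primeCompl
      ((f.extendScalarsOfSurjective hsurj).restrictScalars R) := hf
  have hloc := IsLocalizedModule.of_restrictScalars (p.under R).primeCompl
    (f.extendScalarsOfSurjective hsurj)
  rw [algebraMapSubmonoid_under_primeCompl hsurj p] at hloc
  exact ⟨_, hloc⟩

end ExtOfSection

section ProjectionFormula

theorem exists_dual_sum_smul_eq {R P : Type*} [CommRing R] [AddCommGroup P] [Module R P]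
    [Module.Finite R P] [Module.Projective R P] :
    ∃ (k : ℕ) (φ : Fin k → Module.Dual R P) (p : Fin k → P), ∀ x, ∑ j, φ j x • p j = x := by
  obtain ⟨k, f, g, -, -, hfg⟩ := Module.Finite.exists_comp_eq_id_of_projective R P
  refine ⟨k, fun j => LinearMap.proj j ∘ₗ g, fun j => f (Pi.single j 1), fun x => ?_⟩
  calc ∑ j, g x j • f (Pi.single j 1) = f (∑ j, g x j • Pi.single j 1) := by
        simp only [map_sum, map_smul]
    _ = f (g x) := by rw [← pi_eq_sum_univ' (g x)]
    _ = x := LinearMap.congr_fun hfg x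

variable {R : Type u} [CommRing R] (X : ModuleCat.{u} R) (P : Type u) [AddCommGroup P]
  [Module R P] (i : ℕ)

/-- The natural map `Extⁱ(X, R) ⊗ P → Extⁱ(X, P)`, sending `e ⊗ p` to the image of `e` under the
map `R → P` with value `p` at `1`. -/
noncomputable def extTensorHom :
    Abelian.Ext X (ModuleCat.of R R) i ⊗[R] P →ₗ[R] Abelian.Ext X (ModuleCat.of R P) i :=
  TensorProduct.lift ((Abelian.Ext.bilinearCompOfLinear R X (ModuleCat.of R R) (ModuleCat.of R P)
    i 0 i (add_zero i)).compl₂ (((LinearMap.ringLmapEquivSelf R R P).symm.trans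
      (ModuleCat.homLinearEquiv (M := ModuleCat.of R R) (N := ModuleCat.of R P)).symm).trans
        Abelian.Ext.linearEquiv₀.symm).toLinearMap)

variable {X P i}

theorem extTensorHom_tmul (e : Abelian.Ext X (ModuleCat.of R R) i) (p : P) :
    extTensorHom X P i (e ⊗ₜ p) =
      extPostcomp X (ModuleCat.ofHom (LinearMap.toSpanSingleton R P p)) i e := by
  rfl

theorem extPostcomp_extPostcomp {M M' M'' : ModuleCat.{u} R} (f : M ⟶ M') (g : M' ⟶ M'')
    (e : Abelian.Ext X M i) :
    extPostcomp X g i (extPostcomp X f i e) = extPostcomp X (f ≫ g) i e := by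
  change (e.comp (Abelian.Ext.mk₀ f) (add_zero i)).comp (Abelian.Ext.mk₀ g) (add_zero i) =
    e.comp (Abelian.Ext.mk₀ (f ≫ g)) (add_zero i)
  rw [Abelian.Ext.comp_assoc_of_third_deg_zero, Abelian.Ext.mk₀_comp_mk₀]

theorem extPostcomp_sum {ι : Type*} [Fintype ι] {M M' : ModuleCat.{u} R} (g : ι → (M ⟶ M'))
    (e : Abelian.Ext X M i) :
    extPostcomp X (∑ j, g j) i e = ∑ j, extPostcomp X (g j) i e := by
  change e.comp (Abelian.Ext.mk₀ (∑ j, g j)) (add_zero i) = _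
  rw [Abelian.Ext.mk₀_sum, Abelian.Ext.comp_sum]
  rfl

theorem extPostcomp_extTensorHom_tmul (φ : Module.Dual R P)
    (e : Abelian.Ext X (ModuleCat.of R R) i) (p : P) :
    extPostcomp X (ModuleCat.ofHom φ) i (extTensorHom X P i (e ⊗ₜ p)) = φ p • e := by
  have h : ModuleCat.ofHom (LinearMap.toSpanSingleton R P p) ≫ ModuleCat.ofHom φ =
      φ p • 𝟙 (ModuleCat.of R R) := by
    ext
    simp
  rw [extTensorHom_tmul, extPostcomp_extPostcomp, h]
  change e.comp (Abelian.Ext.mk₀ (φ p • 𝟙 _)) (add_zero i) = φ p • e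
  rw [Abelian.Ext.mk₀_smul, Abelian.Ext.comp_smul, Abelian.Ext.comp_mk₀_id]

theorem extTensorHom_bijective {ι : Type*} [Fintype ι] (φ : ι → Module.Dual R P) (p : ι → P)
    (hφp : ∀ x, ∑ j, φ j x • p j = x) : Function.Bijective (extTensorHom X P i) := by
  let inv : Abelian.Ext X (ModuleCat.of R P) i →ₗ[R] Abelian.Ext X (ModuleCat.of R R) i ⊗[R] P :=
    ∑ j, (TensorProduct.mk R _ P).flip (p j) ∘ₗ extPostcomp X (ModuleCat.ofHom (φ j)) i
  have hinv (e) : inv e = ∑ j, extPostcomp X (ModuleCat.ofHom (φ j)) i e ⊗ₜ[R] p j := by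
    simp only [inv, LinearMap.sum_apply]
    rfl
  refine Function.bijective_iff_has_inverse.mpr ⟨inv, fun z => ?_, fun e => ?_⟩
  · induction z with
    | zero => simp only [map_zero]
    | add z w hz hw => rw [map_add, map_add, hz, hw]
    | tmul e x =>
      simp only [hinv, extPostcomp_extTensorHom_tmul, TensorProduct.smul_tmul]
      rw [← TensorProduct.tmul_sum, hφp]
  · have hid : 𝟙 (ModuleCat.of R P) = ∑ j, ModuleCat.ofHom (φ j) ≫
        ModuleCat.ofHom (LinearMap.toSpanSingleton R P (p j)) := by
      ext x
      simpa [ModuleCat.hom_sum] using (hφp x).symm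
    rw [hinv, map_sum]
    simp only [extTensorHom_tmul, extPostcomp_extPostcomp]
    rw [← extPostcomp_sum, ← hid]
    exact Abelian.Ext.comp_mk₀_id e

end ProjectionFormula

section ExtComparison

variable {R : Type u} [CommRing R]

theorem nonempty_homology_linearEquiv (S : ShortComplex (ModuleCat.{u} R)) {E : Type*}
    [AddCommGroup E] [Module R E] (c : LinearMap.ker S.g.hom →ₗ[R] E)
    (hc : Function.Surjective c)
    (hker : ∀ z, c z = 0 ↔ (z : S.X₂) ∈ LinearMap.range S.f.hom) :
    Nonempty (S.homology ≃ₗ[R] E) := by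
  have hrange : LinearMap.range S.moduleCatToCycles = LinearMap.ker c := by
    ext z
    rw [LinearMap.mem_ker, hker]
    exact exists_congr fun y => Subtype.ext_iff
  exact ⟨S.moduleCatHomologyIso.toLinearEquiv.trans <|
    (Submodule.quotEquivOfEq _ _ hrange).trans (c.quotKerEquivOfSurjective hc)⟩

section Resolution

variable {C : Type*} [Category* C] [Abelian C] [HasExt C] {X Y : C} (P : ProjectiveResolution X)

theorem extMk_zero_eq_zero_iff (f : P.complex.X 0 ⟶ Y) (hf : P.complex.d 1 0 ≫ f = 0) :
    P.extMk f 1 rfl hf = 0 ↔ f = 0 := by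
  refine ⟨fun h => ?_, ?_⟩
  · rw [← P.extEquivCohomologyClass.apply_eq_iff_eq, P.extEquivCohomologyClass_extMk,
      P.extEquivCohomologyClass_zero, CochainComplex.HomComplex.CohomologyClass.mk_eq_zero_iff,
      CochainComplex.HomComplex.Cocycle.toSingleMk_mem_coboundaries_iff _ _ _ _ _ 1 (by simp)]
      at h
    obtain ⟨g, hg⟩ := h
    have hzero : Limits.IsZero (P.cochainComplex.X 1) :=
      CochainComplex.isZero_of_isStrictlyLE _ 0 1 (by simp)
    rw [← cancel_epi (P.cochainComplexXIso _ 0 rfl).hom, ← hg,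
      hzero.eq_of_tgt (P.cochainComplex.d _ 1) 0, Limits.zero_comp, Limits.comp_zero]
  · rintro rfl
    exact P.extMk_zero _ _

theorem extMk_eq_zero_iff_exists_prev {n : ℕ} (f : P.complex.X n ⟶ Y)
    (hf : P.complex.d (n + 1) n ≫ f = 0) :
    P.extMk f (n + 1) rfl hf = 0 ↔
      ∃ g : P.complex.X ((ComplexShape.up ℕ).prev n) ⟶ Y,
        P.complex.d n ((ComplexShape.up ℕ).prev n) ≫ g = f := by
  cases n with
  | zero =>
    have hd : P.complex.d 0 ((ComplexShape.up ℕ).prev 0) = 0 := P.complex.shape _ _ (by simp)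
    rw [extMk_zero_eq_zero_iff P f hf]
    simp only [hd, Limits.zero_comp, exists_const, eq_comm]
  | succ n =>
    rw [show (ComplexShape.up ℕ).prev (n + 1) = n by simp]
    exact P.extMk_eq_zero_iff f _ rfl hf n rfl

theorem smul_extMk [Linear R C] {n : ℕ} (r : R) (f : P.complex.X n ⟶ Y)
    (hf : P.complex.d (n + 1) n ≫ f = 0) :
    r • P.extMk f (n + 1) rfl hf =
      P.extMk (r • f) (n + 1) rfl (by rw [Linear.comp_smul, hf, smul_zero]) := by
  rw [Abelian.Ext.smul_eq_comp_mk₀, P.extMk_comp_mk₀]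
  congr 1
  rw [Linear.comp_smul, Category.comp_id]

end Resolution

theorem nonempty_ext_obj_linearEquiv (X Y : ModuleCat.{u} R) (n : ℕ) :
    Nonempty ((((Ext R (ModuleCat.{u} R) n).obj (Opposite.op X)).obj Y) ≃ₗ[R]
      Abelian.Ext X Y n) := by
  let P := ProjectiveResolution.of X
  let K := P.complex.linearYonedaObj R Y
  let S := K.sc' ((ComplexShape.up ℕ).prev n) n (n + 1)
  let c : LinearMap.ker S.g.hom →ₗ[R] Abelian.Ext X Y n :=
    { toFun := fun f => P.extMk (show P.complex.X n ⟶ Y from f.1) (n + 1) rfl f.2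
      map_add' := fun f g => (P.add_extMk _ _ _ _ _ _).symm
      map_smul' := fun r f => (smul_extMk P r _ f.2).symm }
  have hc : Function.Surjective c := fun e => by
    obtain ⟨f, hf, rfl⟩ := P.extMk_surjective e (n + 1) rfl
    exact ⟨⟨f, hf⟩, rfl⟩
  obtain ⟨e⟩ := nonempty_homology_linearEquiv S c hc fun f =>
    extMk_eq_zero_iff_exists_prev P _ f.2
  exact ⟨((P.isoExt n Y).trans <| ShortComplex.homologyMapIso <|
    K.isoSc' _ n (n + 1) rfl (by simp)).toLinearEquiv.trans e⟩

end ExtComparison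

section EnvelopingAlgebra

variable {A B : Type u} [CommRing A] [CommRing B] [Algebra A B] {N : Type u} [AddCommGroup N]
  [Module A N] [Module B N] [IsScalarTower A B N]

noncomputable local instance : Module (B ⊗[A] B) (N ⊗[A] N) := TensorProduct.envModule A B N

theorem tmul_smul_tmul_envModule (b b' : B) (x y : N) :
    (b ⊗ₜ[A] b') • (x ⊗ₜ[A] y) = (b • x) ⊗ₜ[A] (b' • y) :=
  rfl

/-- The tensor product of two linear forms on `N`, as a linear form on `N ⊗[A] N` over the
enveloping algebra. -/
noncomputable def envDualTensor (φ ψ : Module.Dual B N) : Module.Dual (B ⊗[A] B) (N ⊗[A] N) where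
  __ := TensorProduct.map (φ.restrictScalars A) (ψ.restrictScalars A)
  map_smul' r z := by
    change TensorProduct.map (φ.restrictScalars A) (ψ.restrictScalars A) (r • z) =
      r * TensorProduct.map (φ.restrictScalars A) (ψ.restrictScalars A) z
    induction r with
    | zero => rw [zero_smul, map_zero, zero_mul]
    | add r s hr hs => rw [add_smul, map_add, hr, hs, add_mul]
    | tmul b b' =>
      induction z with
      | zero => rw [smul_zero, map_zero, mul_zero]
      | add z w hz hw => rw [smul_add, map_add, hz, hw, map_add, mul_add]
      | tmul x y => simp [tmul_smul_tmul_envModule]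

theorem envDualTensor_tmul (φ ψ : Module.Dual B N) (x y : N) :
    envDualTensor (A := A) φ ψ (x ⊗ₜ y) = φ x ⊗ₜ ψ y :=
  rfl

theorem sum_envDualTensor_smul {ι : Type*} [Fintype ι] {φ : ι → Module.Dual B N} {p : ι → N}
    (hφp : ∀ x, ∑ j, φ j x • p j = x) (z : N ⊗[A] N) :
    ∑ j : ι × ι, envDualTensor (φ j.1) (φ j.2) z • (p j.1 ⊗ₜ[A] p j.2) = z := by
  induction z with
  | zero => simp only [map_zero, zero_smul, Finset.sum_const_zero]
  | add z w hz hw => simp only [map_add, add_smul, Finset.sum_add_distrib, hz, hw]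
  | tmul x y =>
    simp only [envDualTensor_tmul, tmul_smul_tmul_envModule, Fintype.sum_prod_type]
    simp only [← TensorProduct.tmul_sum, ← TensorProduct.sum_tmul, hφp]

theorem nonempty_ext_linearEquiv_tensor [Module.Finite B N] [Module.Projective B N]
    (X : ModuleCat.{u} (B ⊗[A] B)) (i : ℕ) :
    Nonempty (Abelian.Ext X (ModuleCat.of (B ⊗[A] B) (N ⊗[A] N)) i ≃ₗ[B ⊗[A] B]
      Abelian.Ext X (ModuleCat.of (B ⊗[A] B) (B ⊗[A] B)) i ⊗[B ⊗[A] B] (N ⊗[A] N)) := by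
  obtain ⟨k, φ, p, hφp⟩ := exists_dual_sum_smul_eq (R := B) (P := N)
  exact ⟨(LinearEquiv.ofBijective _ (extTensorHom_bijective _ _
    (sum_envDualTensor_smul (A := A) hφp))).symm⟩

/-- The multiplication map as an algebra structure on `B` over its enveloping algebra. -/
noncomputable abbrev mulAlgebra (A B : Type u) [CommRing A] [CommRing B] [Algebra A B] :
    Algebra (B ⊗[A] B) B :=
  (Algebra.TensorProduct.lmul' A (S := B)).toRingHom.toAlgebra

attribute [local instance] mulAlgebra

theorem algebraMap_mulAlgebra_tmul (b b' : B) : algebraMap (B ⊗[A] B) B (b ⊗ₜ b') = b * b' :=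
  Algebra.TensorProduct.lmul'_apply_tmul b b'

local instance isScalarTower_mulAlgebra : IsScalarTower B (B ⊗[A] B) B :=
  IsScalarTower.of_algebraMap_eq fun b => by
    rw [Algebra.TensorProduct.algebraMap_apply, algebraMap_mulAlgebra_tmul, mul_one]

theorem algebraMap_mulAlgebra_surjective : Function.Surjective (algebraMap (B ⊗[A] B) B) :=
  fun b => ⟨b ⊗ₜ 1, by rw [algebraMap_mulAlgebra_tmul, mul_one]⟩

theorem mapOfCompatibleSMul_env_smul (r : B ⊗[A] B) (z : N ⊗[A] N) :
    TensorProduct.mapOfCompatibleSMul B A A N N (r • z) =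
      algebraMap (B ⊗[A] B) B r • TensorProduct.mapOfCompatibleSMul B A A N N z := by
  induction r with
  | zero => simp only [zero_smul, map_zero]
  | add r s hr hs => rw [add_smul, map_add, hr, hs, map_add, add_smul]
  | tmul b b' =>
    induction z with
    | zero => simp only [smul_zero, map_zero]
    | add z w hz hw => rw [smul_add, map_add, hz, hw, map_add, smul_add]
    | tmul x y =>
      rw [tmul_smul_tmul_envModule, algebraMap_mulAlgebra_tmul]
      exact TensorProduct.smul_tmul_smul b b' x y

theorem nonempty_mulAlgebra_tensor_linearEquiv :
    Nonempty (B ⊗[B ⊗[A] B] (N ⊗[A] N) ≃ₗ[B] N ⊗[B] N) := by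
  let _ : Module (B ⊗[A] B) (N ⊗[B] N) := Module.compHom _ (algebraMap (B ⊗[A] B) B)
  have : IsScalarTower (B ⊗[A] B) B (N ⊗[B] N) := IsScalarTower.of_algebraMap_smul fun _ _ => rfl
  let f : N ⊗[A] N →ₗ[B ⊗[A] B] N ⊗[B] N :=
    { __ := TensorProduct.mapOfCompatibleSMul B A A N N
      map_smul' := mapOfCompatibleSMul_env_smul }
  have hf : IsBaseChange B f := by
    refine IsBaseChange.of_lift_unique _ fun Q _ _ _ _ g => ?_
    have hg (b b' : B) (x y : N) : g ((b • x) ⊗ₜ (b' • y)) = (b * b') • g (x ⊗ₜ y) := by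
      rw [← tmul_smul_tmul_envModule, map_smul, ← algebraMap_smul B,
        algebraMap_mulAlgebra_tmul]
    let g' : N ⊗[B] N →ₗ[B] Q := TensorProduct.lift <| LinearMap.mk₂ B (fun x y => g (x ⊗ₜ y))
      (fun x x' y => by rw [TensorProduct.add_tmul, map_add])
      (fun b x y => by simpa using hg b 1 x y)
      (fun x y y' => by rw [TensorProduct.tmul_add, map_add])
      (fun b x y => by simpa using hg 1 b x y)
    refine ⟨g', ?_, fun h hh => ?_⟩
    · ext z
      induction z with
      | zero => simp only [map_zero]
      | add z w hz hw => rw [map_add, map_add, hz, hw]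
      | tmul x y => rfl
    · refine TensorProduct.ext' fun x y => ?_
      exact LinearMap.congr_fun hh (x ⊗ₜ y)
  exact ⟨hf.equiv⟩

theorem nonempty_ext_linearEquiv_tensor_tensor [Module.Finite B N] [Module.Projective B N]
    (i : ℕ)
    [Module B (Abelian.Ext (ModuleCat.of (B ⊗[A] B) B) (ModuleCat.of (B ⊗[A] B) (B ⊗[A] B)) i)]
    [IsScalarTower B (B ⊗[A] B)
      (Abelian.Ext (ModuleCat.of (B ⊗[A] B) B) (ModuleCat.of (B ⊗[A] B) (B ⊗[A] B)) i)]
    [Module B (Abelian.Ext (ModuleCat.of (B ⊗[A] B) B) (ModuleCat.of (B ⊗[A] B) (N ⊗[A] N)) i)]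
    [IsScalarTower B (B ⊗[A] B)
      (Abelian.Ext (ModuleCat.of (B ⊗[A] B) B) (ModuleCat.of (B ⊗[A] B) (N ⊗[A] N)) i)] :
    Nonempty (Abelian.Ext (ModuleCat.of (B ⊗[A] B) B) (ModuleCat.of (B ⊗[A] B) (N ⊗[A] N)) i ≃ₗ[B]
      Abelian.Ext (ModuleCat.of (B ⊗[A] B) B) (ModuleCat.of (B ⊗[A] B) (B ⊗[A] B)) i ⊗[B]
        (N ⊗[B] N)) := by
  have := isScalarTower_ext (B := B) (M := ModuleCat.of (B ⊗[A] B) (B ⊗[A] B)) (i := i)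
  have := isScalarTower_ext (B := B) (M := ModuleCat.of (B ⊗[A] B) (N ⊗[A] N)) (i := i)
  obtain ⟨e⟩ := nonempty_ext_linearEquiv_tensor (A := A) (N := N)
    (ModuleCat.of (B ⊗[A] B) B) i
  obtain ⟨e'⟩ := nonempty_mulAlgebra_tensor_linearEquiv (A := A) (B := B) (N := N)
  exact ⟨(e.extendScalarsOfSurjective algebraMap_mulAlgebra_surjective).trans <|
    (TensorProduct.AlgebraTensorModule.cancelBaseChange (B ⊗[A] B) B B _ _).symm.trans <|
      e'.lTensor _⟩

/-- `N` is a rigid module over `B` relative to `A`, up to a shift by `n`: the module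
`Ext^i_{B ⊗[A] B}(B, N ⊗[A] N)` vanishes for `i ≠ n` and is isomorphic to `N` for `i = n`.  The
enveloping algebra acts on `B` through the multiplication map, and `B` acts on `Ext` through the
left factor of `B ⊗[A] B`. -/
def IsRigidInDegree (A B N : Type u) [CommRing A] [CommRing B] [Algebra A B] [AddCommGroup N]
    [Module A N] [Module B N] [IsScalarTower A B N] (n : ℕ) : Prop :=
  (∀ i : ℕ, i ≠ n →
    Subsingleton (((Ext (B ⊗[A] B) (ModuleCat.{u} (B ⊗[A] B)) i).obj
      (Opposite.op (ModuleCat.of (B ⊗[A] B) B))).obj (ModuleCat.of (B ⊗[A] B) (N ⊗[A] N)))) ∧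
  (letI : Module B (((Ext (B ⊗[A] B) (ModuleCat.{u} (B ⊗[A] B)) n).obj
      (Opposite.op (ModuleCat.of (B ⊗[A] B) B))).obj (ModuleCat.of (B ⊗[A] B) (N ⊗[A] N))) :=
    Module.compHom _ (algebraMap B (B ⊗[A] B))
  Nonempty ((((Ext (B ⊗[A] B) (ModuleCat.{u} (B ⊗[A] B)) n).obj
      (Opposite.op (ModuleCat.of (B ⊗[A] B) B))).obj (ModuleCat.of (B ⊗[A] B) (N ⊗[A] N))) ≃ₗ[B] N))

theorem isRigidInDegree_of_ext {n : ℕ}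
    [Module B (Abelian.Ext (ModuleCat.of (B ⊗[A] B) B) (ModuleCat.of (B ⊗[A] B) (B ⊗[A] B)) n)]
    [IsScalarTower B (B ⊗[A] B)
      (Abelian.Ext (ModuleCat.of (B ⊗[A] B) B) (ModuleCat.of (B ⊗[A] B) (B ⊗[A] B)) n)]
    (hvanish : ∀ i ≠ n, Subsingleton
      (Abelian.Ext (ModuleCat.of (B ⊗[A] B) B) (ModuleCat.of (B ⊗[A] B) (B ⊗[A] B)) i))
    (e : Abelian.Ext (ModuleCat.of (B ⊗[A] B) B) (ModuleCat.of (B ⊗[A] B) (B ⊗[A] B)) n ⊗[B] N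
      ≃ₗ[B] B) :
    IsRigidInDegree A B N n := by
  have : Module.Invertible B N := Module.Invertible.right e
  refine ⟨fun i hi => ?_, ?_⟩
  · obtain ⟨c⟩ := nonempty_ext_obj_linearEquiv (ModuleCat.of (B ⊗[A] B) B)
      (ModuleCat.of (B ⊗[A] B) (N ⊗[A] N)) i
    obtain ⟨f⟩ := nonempty_ext_linearEquiv_tensor (A := A) (N := N) (ModuleCat.of (B ⊗[A] B) B) i
    have := hvanish i hi
    exact (c.trans f).injective.subsingleton
  · obtain ⟨c⟩ := nonempty_ext_obj_linearEquiv (ModuleCat.of (B ⊗[A] B) B)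
      (ModuleCat.of (B ⊗[A] B) (N ⊗[A] N)) n
    let _ : Module B (((Ext (B ⊗[A] B) (ModuleCat.{u} (B ⊗[A] B)) n).obj
        (Opposite.op (ModuleCat.of (B ⊗[A] B) B))).obj (ModuleCat.of (B ⊗[A] B) (N ⊗[A] N))) :=
      Module.compHom _ (algebraMap B (B ⊗[A] B))
    have : IsScalarTower B (B ⊗[A] B) (((Ext (B ⊗[A] B) (ModuleCat.{u} (B ⊗[A] B)) n).obj
        (Opposite.op (ModuleCat.of (B ⊗[A] B) B))).obj (ModuleCat.of (B ⊗[A] B) (N ⊗[A] N))) :=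
      IsScalarTower.of_algebraMap_smul fun _ _ => rfl
    let _ : Module B (Abelian.Ext (ModuleCat.of (B ⊗[A] B) B)
        (ModuleCat.of (B ⊗[A] B) (N ⊗[A] N)) n) :=
      Module.compHom _ (algebraMap B (B ⊗[A] B))
    have : IsScalarTower B (B ⊗[A] B) (Abelian.Ext (ModuleCat.of (B ⊗[A] B) B)
        (ModuleCat.of (B ⊗[A] B) (N ⊗[A] N)) n) :=
      IsScalarTower.of_algebraMap_smul fun _ _ => rfl
    obtain ⟨f⟩ := nonempty_ext_linearEquiv_tensor_tensor (A := A) (B := B) (N := N) n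
    exact ⟨(c.restrictScalars B).trans <| f.trans <| Module.Invertible.leftCancelEquiv N e⟩

theorem exists_rigid_module_general [IsNoetherianRing (B ⊗[A] B)] [Algebra.EssFiniteType A B]
    [Algebra.FormallySmooth A B] {n : ℕ}
    (hn : ∀ p : PrimeSpectrum B, Module.rankAtStalk (R := B) Ω[B⁄A] p = n) :
    ∃ (N : Type u) (_ : AddCommGroup N) (_ : Module B N), Module.IsInvertible B N ∧
      ∀ [Module A N] [IsScalarTower A B N], IsRigidInDegree A B N n := by
  have hI : IsLocallyCompleteIntersection (RingHom.ker (algebraMap (B ⊗[A] B) B)) n :=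
    isLocallyCompleteIntersection_ker_of_formallySmooth fun q => by
      rw [rankAtStalk_kaehlerDifferential_tensorProduct, hn]
  let D := Abelian.Ext (ModuleCat.of (B ⊗[A] B) B) (ModuleCat.of (B ⊗[A] B) (B ⊗[A] B)) n
  let _ : Module B D := Module.compHom D (algebraMap B (B ⊗[A] B))
  have : IsScalarTower B (B ⊗[A] B) D := IsScalarTower.of_algebraMap_smul fun _ _ => rfl
  have : Module.Invertible B D := invertible_ext_of_isLocallyCompleteIntersection hI
  let e : D ⊗[B] Module.Dual B D ≃ₗ[B] B :=
    (TensorProduct.comm B _ _).trans (Module.Invertible.linearEquiv B D)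
  refine ⟨Module.Dual B D, inferInstance, inferInstance,
    ⟨D, inferInstance, inferInstance, ⟨Module.Invertible.linearEquiv B D⟩⟩, ?_⟩
  intro _ _
  exact isRigidInDegree_of_ext (fun i hi => subsingleton_ext_of_isLocallyCompleteIntersection
    algebraMap_mulAlgebra_surjective hI hi) e

end EnvelopingAlgebra

/-- **Existence of rigid modules over smooth maps.**
Let `A` be a commutative noetherian ring and `B` a nonzero, flat, formally smooth
`A`-algebra, essentially of finite type over `A`, with connected spectrum.  Then there
exist an invertible `B`-module `N̄` and an `n : ℕ` such that
`Ext^i_{B ⊗[A] B}(B, N̄ ⊗[A] N̄) = 0` for all `i ≠ n` and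
`Ext^n_{B ⊗[A] B}(B, N̄ ⊗[A] N̄) ≅ N̄` as `B`-modules; that is, `N̄` is (up to shift) a
rigid module over `B` relative to `A`. -/
theorem exists_rigid_module
    {A B : Type u} [CommRing A] [CommRing B] [Algebra A B]
    [IsNoetherianRing A] [Nontrivial B]
    [Algebra.EssFiniteType A B] [Algebra.FormallySmooth A B]
    (hflat : Module.Flat A B)
    (hconn : ConnectedSpace (PrimeSpectrum B)) :
    ∃ (N : Type u) (_ : AddCommGroup N) (_ : Module B N) (n : ℕ),
      Module.IsInvertible B N ∧
      (letI : Module A N := Module.compHom N (algebraMap A B)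
       haveI : IsScalarTower A B N := IsScalarTower.of_algebraMap_smul fun _ _ => rfl
       letI := TensorProduct.envModule A B N
       letI := ((Algebra.TensorProduct.lmul' A (S := B)).toRingHom).toModule
       (∀ i : ℕ, i ≠ n →
         Subsingleton (((Ext (B ⊗[A] B) (ModuleCat.{u} (B ⊗[A] B)) i).obj
           (Opposite.op (ModuleCat.of (B ⊗[A] B) B))).obj
             (ModuleCat.of (B ⊗[A] B) (N ⊗[A] N)))) ∧
       (letI : Module B (((Ext (B ⊗[A] B) (ModuleCat.{u} (B ⊗[A] B)) n).obj
           (Opposite.op (ModuleCat.of (B ⊗[A] B) B))).obj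
             (ModuleCat.of (B ⊗[A] B) (N ⊗[A] N))) :=
          Module.compHom _ (algebraMap B (B ⊗[A] B))
        Nonempty ((((Ext (B ⊗[A] B) (ModuleCat.{u} (B ⊗[A] B)) n).obj
           (Opposite.op (ModuleCat.of (B ⊗[A] B) B))).obj
             (ModuleCat.of (B ⊗[A] B) (N ⊗[A] N))) ≃ₗ[B] N))) := by
  have : IsNoetherianRing B := Algebra.EssFiniteType.isNoetherianRing A B
  have : IsNoetherianRing (B ⊗[A] B) := Algebra.EssFiniteType.isNoetherianRing B (B ⊗[A] B)
  obtain ⟨p⟩ : Nonempty (PrimeSpectrum B) := inferInstance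
  obtain ⟨N, _, _, hN, hrigid⟩ := exists_rigid_module_general (A := A) (B := B) fun q =>
    (Module.isLocallyConstant_rankAtStalk (R := B) (M := Ω[B⁄A])).apply_eq_of_preconnectedSpace q p
  let _ : Module A N := Module.compHom N (algebraMap A B)
  have : IsScalarTower A B N := IsScalarTower.of_algebraMap_smul fun _ _ => rfl
  exact ⟨N, _, _, _, hN, hrigid⟩
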